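/- Let n be a natural number, let M be a connected Hausdorff topological space locally homeomorphic to the euclidean space ℝⁿ (a topological n-manifold), and let G be a countable group acting effectively (faithfully) by homeomorphisms on M such that the orbit space M/G is Hausdorff. Then the action is perfect: for every pair of compact subsets A, B ⊆ M the set {g ∈ G : gA ∩ B ≠ ∅} is finite; in particular every stabilizer G_x is finite. -/

import Mathlib

section
set_option autoImplicit false
namespace Newman

/-- vertices of the Kuhn simplex -/
def vtx {n : ℕ} (z : Fin n → ℤ) (σ : Equiv.Perm (Fin n)) (k : Fin (n+1)) : Fin n → ℤ :=
  fun i => z i + if ((σ.symm i : Fin n) : ℕ) < (k : ℕ) then 1 else 0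

/-- signed sum over the Kuhn triangulation -/
noncomputable def ksum {n : ℕ} (F : (Fin (n+1) → (Fin n → ℤ)) → ℤ) : ℤ :=
  ∑ᶠ z : Fin n → ℤ, ∑ σ : Equiv.Perm (Fin n), (Equiv.Perm.sign σ : ℤ) * F (vtx z σ)

/-- row vector of a label -/
def row {m : ℕ} (a : Fin m) : Fin m → ℤ := fun j => if a = j then 1 else 0

/-- the top cochain -/
def c0 {m : ℕ} (a : Fin m → Fin m) : ℤ := Matrix.det (Matrix.of fun k => row (a k))

lemma c0_eq_zero {m : ℕ} (a : Fin m → Fin m) (h : ¬ Function.Surjective a) : c0 a = 0 := by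
  have : ¬ Function.Injective a := by rwa [Finite.injective_iff_surjective]
  simp only [Function.Injective, not_forall] at this
  obtain ⟨i, j, hij, hne⟩ := this
  exact Matrix.det_zero_of_row_eq hne (by ext; simp [hij])

lemma c0_id {m : ℕ} : c0 (id : Fin m → Fin m) = 1 := by
  unfold c0
  rw [← Matrix.det_one (n := Fin m) (R := ℤ)]
  congr 1

/-- Cramer-type identity. -/
lemma cramer {n : ℕ} (d : Fin (n+1) → ℤ) (hd : ∑ j, d j = 0) (r : Fin (n+1) → Fin (n+1) → ℤ)
    (hr : ∀ k, ∑ j, r k j = 1) :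
    ∑ j : Fin (n+1), (-1 : ℤ)^(j:ℕ) *
      Matrix.det (Matrix.of (Fin.cons d (fun i => r (j.succAbove i)) : Fin (n+1) → Fin (n+1) → ℤ)) = 0 := by
  let w : Fin (n+2) → Fin (n+1) → ℤ := Fin.cons d r
  let A : Matrix (Fin (n+2)) (Fin (n+2)) ℤ := Matrix.of fun i => (Fin.cons (∑ j, w i j) (w i) : Fin (n+2) → ℤ)
  have hA : A.det = 0 := by
    apply Matrix.exists_mulVec_eq_zero_iff.1
    refine ⟨Fin.cons (-1) (fun _ => 1), ?_, ?_⟩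
    · intro h
      have := congrFun h 0
      simp at this
    · ext i
      simp [A, Matrix.mulVec, dotProduct, Fin.sum_univ_succ]
  rw [Matrix.det_succ_column_zero] at hA
  rw [Fin.sum_univ_succ] at hA
  have h0 : A 0 0 = 0 := by simp [A, w, hd]
  rw [h0] at hA
  simp only [mul_zero, zero_mul, zero_add] at hA
  rw [← neg_eq_zero, ← hA, ← Finset.sum_neg_distrib]
  apply Finset.sum_congr rfl
  intro j _
  have h1 : A j.succ 0 = 1 := by simp [A, w, hr]
  rw [h1, Fin.val_succ, pow_succ]
  have : (Matrix.of (Fin.cons d (fun i => r (j.succAbove i)) : Fin (n+1) → Fin (n+1) → ℤ))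
     = A.submatrix j.succ.succAbove Fin.succ := by
    ext i k
    refine Fin.cases ?_ (fun i => ?_) i
    · simp [A, w]
    · simp [A, w]
  rw [this]; ring

lemma update_row {n : ℕ} (r : Fin (n+1) → Fin (n+1) → ℤ) (k : Fin (n+1)) (e : Fin (n+1) → ℤ) :
    Matrix.det (Matrix.of (Function.update r k e)) - Matrix.det (Matrix.of r)
    = (-1)^(k:ℕ) * Matrix.det (Matrix.of (Fin.cons (e - r k) (fun i => r (k.succAbove i)) : Fin (n+1) → Fin (n+1) → ℤ)) := by
  rw [Matrix.det_succ_row _ k, Matrix.det_succ_row (Matrix.of r) k, Matrix.det_succ_row_zero,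
    ← Finset.sum_sub_distrib, Finset.mul_sum]
  apply Finset.sum_congr rfl
  intro j _
  have h1 : (Matrix.of (Function.update r k e)).submatrix k.succAbove j.succAbove
     = (Matrix.of r).submatrix k.succAbove j.succAbove := by
    ext a b; simp
  have h2 : (Matrix.of (Fin.cons (e - r k) (fun i => r (k.succAbove i)) : Fin (n+1) → Fin (n+1) → ℤ)).submatrix Fin.succ j.succAbove = (Matrix.of r).submatrix k.succAbove j.succAbove := by
    ext a b; simp
  rw [h1, h2]
  simp [pow_add]
  ring

end Newman
end

section
set_option autoImplicit false
namespace Newman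

lemma face_rot {m : ℕ} (z : Fin (m+1) → ℤ) (σ : Equiv.Perm (Fin (m+1))) :
    (vtx z σ) ∘ (0 : Fin (m+2)).succAbove =
    (vtx (z + Pi.single (σ 0) 1) (σ * finRotate (m+1))) ∘ (Fin.last (m+1)).succAbove := by
  ext k i
  simp only [vtx, Function.comp, Fin.zero_succAbove, Fin.val_succ, Fin.succAbove_last, Fin.val_castSucc,
    Pi.add_apply, Pi.single_apply]
  obtain ⟨l, hl⟩ : ∃ l, finRotate (m+1) l = σ.symm i := ⟨(finRotate (m+1)).symm (σ.symm i), by simp⟩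
  have h1 : (σ * finRotate (m+1)).symm i = l := by
    rw [Equiv.symm_apply_eq]; simp [Equiv.Perm.mul_apply, hl]
  have h2 : (i = σ 0) ↔ finRotate (m+1) l = 0 := by
    rw [hl, Equiv.symm_apply_eq]
  rw [h1, ← hl]
  simp only [h2]
  by_cases h : l = Fin.last m
  · subst h
    rw [finRotate_last]
    have := k.2
    simp
    omega
  · have h3 := coe_finRotate_of_ne_last h
    have h4 : finRotate (m+1) l ≠ 0 := by
      intro h5; rw [h5] at h3; simp at h3
    rw [if_neg h4, h3, add_zero]
    simp only [Nat.add_lt_add_iff_right]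

lemma face_swap {m : ℕ} (z : Fin (m+1) → ℤ) (σ : Equiv.Perm (Fin (m+1))) (j : Fin (m+2))
    (a b : Fin (m+1)) (ha : (a:ℕ) + 1 = j) (hb : (b:ℕ) = j) :
    (vtx z (σ * Equiv.swap a b)) ∘ j.succAbove = (vtx z σ) ∘ j.succAbove := by
  ext k i
  simp only [vtx, Function.comp]
  have h1 : (σ * Equiv.swap a b).symm i = Equiv.swap a b (σ.symm i) := by
    rw [Equiv.symm_apply_eq]; simp [Equiv.Perm.mul_apply]
  rw [h1]
  have hne : ((j.succAbove k : Fin (m+2)) : ℕ) ≠ j := fun h => Fin.succAbove_ne j k (Fin.ext h)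
  congr 1
  generalize σ.symm i = l
  rw [Equiv.swap_apply_def]
  split_ifs <;> simp_all <;> omega

lemma stokes {m : ℕ} (φ : (Fin (m+1) → (Fin (m+1) → ℤ)) → ℤ) (B : Set (Fin (m+1) → ℤ)) (hB : B.Finite)
    (hφ : ∀ z σ, ∀ j : Fin (m+2), z ∉ B → φ (vtx z σ ∘ j.succAbove) = 0) :
    ksum (fun v : Fin (m+2) → (Fin (m+1) → ℤ) =>
      ∑ j : Fin (m+2), (-1 : ℤ)^(j:ℕ) * φ (v ∘ j.succAbove)) = 0 := by
  unfold ksum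
  let S : Fin (m+2) → Equiv.Perm (Fin (m+1)) → (Fin (m+1) → ℤ) → ℤ := fun j σ z =>
    (Equiv.Perm.sign σ : ℤ) * ((-1 : ℤ)^(j:ℕ) * φ (vtx z σ ∘ j.succAbove))
  have hS : ∀ j σ, (Function.support (S j σ)).Finite := by
    intro j σ
    apply hB.subset
    intro z hz
    by_contra h
    apply hz
    simp [S, hφ z σ j h]
  have e1 : ∀ z, (∑ σ : Equiv.Perm (Fin (m+1)), (Equiv.Perm.sign σ : ℤ) *
      ∑ j : Fin (m+2), (-1 : ℤ)^(j:ℕ) * φ (vtx z σ ∘ j.succAbove)) =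
      ∑ j : Fin (m+2), ∑ σ, S j σ z := by
    intro z
    rw [Finset.sum_comm]
    simp only [Finset.mul_sum, S]
  rw [finsum_congr e1]
  have e2 : ∀ z, ∑ j : Fin (m+2), ∑ σ, S j σ z = ∑ σ, (S 0 σ z + S (Fin.last _) σ z) := by
    intro z
    rw [Fin.sum_univ_succ, Fin.sum_univ_castSucc, Finset.sum_add_distrib]
    have : ∑ i : Fin m, ∑ σ, S i.castSucc.succ σ z = 0 := by
      apply Finset.sum_eq_zero
      intro i _
      set a : Fin (m+1) := i.castSucc
      set b : Fin (m+1) := i.succ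
      have hab : a ≠ b := by intro h; simp [a, b, Fin.ext_iff] at h
      apply Finset.sum_involution (fun σ _ => σ * Equiv.swap a b)
      · intro σ _
        simp only [S]
        rw [face_swap z σ _ a b rfl rfl, Equiv.Perm.sign_mul, Equiv.Perm.sign_swap hab]
        simp
      · intro σ _ _ h
        exact hab (Equiv.swap_eq_one_iff.1 (mul_eq_left.1 h))
      · simp
      · intro σ _; simp [mul_assoc]
    rw [this]; simp
  rw [finsum_congr e2]
  rw [finsum_sum_comm]
  swap
  · intro σ _
    exact ((hS 0 σ).union (hS (Fin.last _) σ)).subset (Function.support_add _ _)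
  have e3 : ∀ σ, ∑ᶠ z, (S 0 σ z + S (Fin.last _) σ z) = ∑ᶠ z, S 0 σ z + ∑ᶠ z, S (Fin.last _) σ z := by
    intro σ
    exact finsum_add_distrib (hS _ _) (hS _ _)
  simp only [e3, Finset.sum_add_distrib]
  have e4 : ∀ σ, ∑ᶠ z, S 0 σ z = - ∑ᶠ z, S (Fin.last _) (σ * finRotate (m+1)) z := by
    intro σ
    rw [← finsum_comp_equiv (f := S (Fin.last _) (σ * finRotate (m+1)))
      (Equiv.addRight (Pi.single (σ 0) 1)), ← finsum_neg_distrib]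
    apply finsum_congr
    intro z
    simp only [S, Equiv.coe_addRight]
    rw [face_rot, Equiv.Perm.sign_mul, sign_finRotate]
    generalize φ _ = x
    generalize (Equiv.Perm.sign σ) = y
    have : ((-1 : ℤ)^m) * (-1)^m = 1 := by rw [← mul_pow]; simp
    simp only [Fin.val_zero, pow_zero, Fin.val_last, pow_succ, Units.val_mul, Units.val_pow_eq_pow_val,
      Units.val_neg, Units.val_one, add_tsub_cancel_right]
    linear_combination (-(y:ℤ) * x) * this
  simp only [e4, Finset.sum_neg_distrib]
  rw [Fintype.sum_equiv (Equiv.mulRight (finRotate (m+1))) (fun σ => ∑ᶠ z, S (Fin.last _) (σ * finRotate (m+1)) z) (fun σ => ∑ᶠ z, S (Fin.last _) σ z) (fun σ => rfl)]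
  simp

end Newman
end

section
set_option autoImplicit false
namespace Newman

lemma vtx_zero {n : ℕ} (z : Fin n → ℤ) (σ : Equiv.Perm (Fin n)) : vtx z σ 0 = z := by
  ext i; simp [vtx]

lemma vtx_bounds {n : ℕ} (z : Fin n → ℤ) (σ : Equiv.Perm (Fin n)) (k : Fin (n+1)) (i : Fin n) :
    z i ≤ vtx z σ k i ∧ vtx z σ k i ≤ z i + 1 := by
  unfold vtx; split_ifs <;> simp

lemma vtx_inj {n : ℕ} (z : Fin n → ℤ) (σ : Equiv.Perm (Fin n)) : Function.Injective (vtx z σ) := by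
  have key : ∀ k l : Fin (n+1), k < l → vtx z σ k ≠ vtx z σ l := by
    intro k l h e
    have hk : (k:ℕ) < n := by have := l.2; have : (k:ℕ) < l := h; omega
    have := congrFun e (σ ⟨k, hk⟩)
    simp [vtx] at this
    exact absurd h (not_lt.2 this)
  intro k l h
  rcases lt_trichotomy k l with h1 | h1 | h1
  · exact absurd h (key _ _ h1)
  · exact h1
  · exact absurd h.symm (key _ _ h1)

lemma ksum_congr {n : ℕ} {F F' : (Fin (n+1) → (Fin n → ℤ)) → ℤ} (h : ∀ z σ, F (vtx z σ) = F' (vtx z σ)) :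
    ksum F = ksum F' := by
  unfold ksum; simp only [h]

lemma ksum_sub {n : ℕ} {F F' : (Fin (n+1) → (Fin n → ℤ)) → ℤ} (B : Set (Fin n → ℤ)) (hB : B.Finite)
    (h : ∀ z σ, z ∉ B → F (vtx z σ) = 0) (h' : ∀ z σ, z ∉ B → F' (vtx z σ) = 0) :
    ksum (fun v => F v - F' v) = ksum F - ksum F' := by
  unfold ksum
  rw [← finsum_sub_distrib]
  · simp only [mul_sub, Finset.sum_sub_distrib]
  · apply hB.subset; intro z hz; by_contra hh; apply hz
    exact Finset.sum_eq_zero fun σ _ => by rw [h z σ hh, mul_zero]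
  · apply hB.subset; intro z hz; by_contra hh; apply hz
    exact Finset.sum_eq_zero fun σ _ => by rw [h' z σ hh, mul_zero]

lemma ksum_sum {n : ℕ} {ι : Type} (s : Finset ι) {F : ι → (Fin (n+1) → (Fin n → ℤ)) → ℤ} (B : Set (Fin n → ℤ)) (hB : B.Finite)
    (h : ∀ i, ∀ z σ, z ∉ B → F i (vtx z σ) = 0) :
    ksum (fun v => ∑ i ∈ s, F i v) = ∑ i ∈ s, ksum (F i) := by
  unfold ksum
  rw [← finsum_sum_comm]
  · apply finsum_congr; intro z
    rw [Finset.sum_comm]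
    simp only [Finset.mul_sum]
  · intro i _
    apply hB.subset; intro z hz; by_contra hh; apply hz
    exact Finset.sum_eq_zero fun σ _ => by rw [h i z σ hh, mul_zero]

lemma ksum_mul {n : ℕ} {F : (Fin (n+1) → (Fin n → ℤ)) → ℤ} (c : ℤ) :
    ksum (fun v => c * F v) = c * ksum F := by
  unfold ksum
  rw [← smul_eq_mul, smul_finsum]
  apply finsum_congr; intro z
  rw [smul_eq_mul, Finset.mul_sum]
  exact Finset.sum_congr rfl fun σ _ => by ring

open Classical in
lemma single_change {m : ℕ} (a : (Fin (m+1) → ℤ) → Fin (m+2)) (x0 : Fin (m+1) → ℤ) (β : Fin (m+2)) :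
    ksum (fun v : Fin (m+2) → (Fin (m+1) → ℤ) => c0 (Function.update a x0 β ∘ v) - c0 (a ∘ v)) = 0 := by
  let d : Fin (m+2) → ℤ := row β - row (a x0)
  have hrow : ∀ b : Fin (m+2), ∑ j, row b j = 1 := by intro b; simp [row]
  have hd : ∑ j, d j = 0 := by simp [d, hrow]
  let φ : (Fin (m+1) → (Fin (m+1) → ℤ)) → ℤ := fun u =>
    if x0 ∈ Set.range u then
      - Matrix.det (Matrix.of (Fin.cons d (fun i => row (a (u i))) : Fin (m+2) → Fin (m+2) → ℤ)) else 0
  rw [← stokes φ (Set.Icc (x0 - 1) x0) (Set.finite_Icc _ _)]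
  · apply ksum_congr
    intro z σ
    set v := vtx z σ with hv
    have hinj : Function.Injective v := vtx_inj z σ
    by_cases hx : x0 ∈ Set.range v
    · obtain ⟨k, hk⟩ := hx
      have h1 := update_row (fun i => row (a (v i))) k (row β)
      have h2 : Matrix.det (Matrix.of (Function.update (fun i => row (a (v i))) k (row β))) =
          c0 (Function.update a x0 β ∘ v) := by
        unfold c0
        congr 1
        ext i j
        by_cases hi : i = k
        · subst hi; simp [hk]
        · have : v i ≠ x0 := fun h => hi (hinj (h.trans hk.symm))
          simp [hi, this]
      have h3 : Matrix.det (Matrix.of (fun i => row (a (v i)))) = c0 (a ∘ v) := rfl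
      rw [h2, h3, hk] at h1
      rw [h1]
      have h4 := cramer d hd (fun i => row (a (v i))) (fun i => hrow _)
      have h5 : ∀ j : Fin (m+2), (-1 : ℤ)^(j:ℕ) * φ (v ∘ j.succAbove) =
        (if j = k then (-1 : ℤ)^(k:ℕ) * Matrix.det (Matrix.of (Fin.cons d (fun i => row (a (v (k.succAbove i)))) : Fin (m+2) → Fin (m+2) → ℤ)) else 0) -
        (-1 : ℤ)^(j:ℕ) * Matrix.det (Matrix.of (Fin.cons d (fun i => row (a (v (j.succAbove i)))) : Fin (m+2) → Fin (m+2) → ℤ)) := by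
        intro j
        by_cases hj : j = k
        · subst hj
          have : x0 ∉ Set.range (v ∘ j.succAbove) := by
            rintro ⟨i, hi⟩
            exact Fin.succAbove_ne j i (hinj (hi.trans hk.symm))
          simp only [φ, if_neg this]; simp
        · have : x0 ∈ Set.range (v ∘ j.succAbove) := by
            obtain ⟨i, hi⟩ := Fin.exists_succAbove_eq (Ne.symm hj)
            exact ⟨i, by simp [hi, hk]⟩
          simp only [φ, if_pos this]; simp [hj]
      rw [Finset.sum_congr rfl (fun j _ => h5 j), Finset.sum_sub_distrib, h4]
      simp [d]
    · have h1 : Function.update a x0 β ∘ v = a ∘ v := by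
        ext i; rw [Function.comp, Function.update_of_ne (fun h => hx ⟨i, h⟩)]; rfl
      rw [h1, sub_self, eq_comm]
      apply Finset.sum_eq_zero
      intro j _
      have : x0 ∉ Set.range (v ∘ j.succAbove) := by
        rintro ⟨i, hi⟩
        exact hx ⟨_, hi⟩
      simp only [φ, if_neg this]; simp
  · intro z σ j hz
    have : x0 ∉ Set.range (vtx z σ ∘ j.succAbove) := by
      rintro ⟨i, hi⟩
      apply hz
      rw [← hi]
      constructor
      · intro l
        have := vtx_bounds z σ (j.succAbove i) l
        simp; omega
      · intro l
        exact (vtx_bounds z σ (j.succAbove i) l).1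
    simp only [φ, if_neg this]

open Classical in
lemma retag {m : ℕ} (w : (Fin (m+1) → ℤ) → ℤ) (hw : (Function.support w).Finite)
    (a b : (Fin (m+1) → ℤ) → Fin (m+2))
    (H : ∀ z σ, ∀ l : (Fin (m+1) → ℤ) → Fin (m+2), (∀ x, l x = a x ∨ l x = b x) →
      (∃ k, w (vtx z σ k) ≠ w (vtx z σ 0)) → ¬ Function.Surjective (l ∘ vtx z σ)) :
    ksum (fun v => w (v 0) * c0 (a ∘ v)) = ksum (fun v => w (v 0) * c0 (b ∘ v)) := by
  have key : ∀ S : Finset (Fin (m+1) → ℤ), ksum (fun v => w (v 0) * c0 ((fun x => if x ∈ S then b x else a x) ∘ v))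
      = ksum (fun v => w (v 0) * c0 (a ∘ v)) := by
    intro S
    induction S using Finset.induction_on with
    | empty => simp [Function.comp_def]
    | insert x0 S hx ih =>
      rw [← ih, ← sub_eq_zero, ← ksum_sub _ hw]
      rotate_left
      · intro z σ hz; simp only [Function.mem_support, not_not] at hz; simp [vtx_zero, hz]
      · intro z σ hz; simp only [Function.mem_support, not_not] at hz; simp [vtx_zero, hz]
      set l : (Fin (m+1) → ℤ) → Fin (m+2) := fun x => if x ∈ S then b x else a x with hl
      have hl' : (fun x => if x ∈ insert x0 S then b x else a x) = Function.update l x0 (b x0) := by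
        ext x
        by_cases h : x = x0
        · subst h; simp
        · simp [h, hl]
      rw [hl']
      have := ksum_mul (F := fun v => c0 (Function.update l x0 (b x0) ∘ v) - c0 (l ∘ v)) (w x0)
      rw [single_change, mul_zero] at this
      rw [← this]
      apply ksum_congr
      intro z σ
      set v := vtx z σ with hv
      by_cases hx : x0 ∈ Set.range v
      · obtain ⟨k, hk⟩ := hx
        by_cases hwk : w (v k) = w (v 0)
        · rw [← hk, hwk]; ring
        · rw [c0_eq_zero, c0_eq_zero]
          · simp
          · apply H z σ _ _ ⟨k, hwk⟩
            intro x; simp only [hl]; split_ifs <;> simp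
          · apply H z σ _ _ ⟨k, hwk⟩
            intro x
            rw [← hl']
            simp only; split_ifs <;> simp
      · have h1 : Function.update l x0 (b x0) ∘ v = l ∘ v := by
          ext i; rw [Function.comp, Function.update_of_ne (fun h => hx ⟨i, h⟩)]; rfl
        rw [h1]; simp
  let S : Finset (Fin (m+1) → ℤ) := hw.toFinset.biUnion fun z => Finset.univ.biUnion fun σ : Equiv.Perm (Fin (m+1)) =>
    Finset.univ.image (vtx z σ)
  rw [← key S]
  apply ksum_congr
  intro z σ
  by_cases hz : w z = 0
  · simp [vtx_zero, hz]
  · congr 2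
    ext k
    have : vtx z σ k ∈ S := by
      simp only [S, Finset.mem_biUnion, Finset.mem_univ, true_and, Finset.mem_image, Set.Finite.mem_toFinset]
      exact ⟨z, hz, σ, k, rfl⟩
    simp [this]

end Newman
end

section
set_option autoImplicit false
namespace Newman
open Metric

open Classical in
/-- The label of a vector: the first negative coordinate (or the last label). -/
noncomputable def lab {n : ℕ} (y : Fin n → ℝ) : Fin (n+1) :=
  (Finset.univ.filter (fun k : Fin (n+1) => ∀ i : Fin n, i.castSucc = k → y i < 0)).min'
    ⟨Fin.last n, by
      simp only [Finset.mem_filter, Finset.mem_univ, true_and]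
      intro i h; exact absurd h (Fin.castSucc_lt_last i).ne⟩

lemma lab_mem {n : ℕ} (y : Fin n → ℝ) (i : Fin n) (h : i.castSucc = lab y) : y i < 0 := by
  classical
  have := Finset.min'_mem (Finset.univ.filter (fun k : Fin (n+1) => ∀ i : Fin n, i.castSucc = k → y i < 0))
    ⟨Fin.last n, by
      simp only [Finset.mem_filter, Finset.mem_univ, true_and]
      intro i h; exact absurd h (Fin.castSucc_lt_last i).ne⟩
  simp only [Finset.mem_filter, Finset.mem_univ, true_and] at this
  exact this i (by rw [h]; unfold lab; congr)

lemma lab_le {n : ℕ} (y : Fin n → ℝ) (i : Fin n) (h : y i < 0) : lab y ≤ i.castSucc := by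
  classical
  unfold lab
  apply Finset.min'_le
  simp only [Finset.mem_filter, Finset.mem_univ, true_and]
  intro j hj
  rw [Fin.castSucc_injective n hj]; exact h

lemma lab_missing {n : ℕ} (y : Fin n → ℝ) (hy : y ≠ 0) : ∃ i, ∀ᶠ y' in nhds y, lab y' ≠ i := by
  obtain ⟨j, hj⟩ := Function.ne_iff.1 hy
  rcases lt_or_gt_of_ne hj with h | h
  · refine ⟨Fin.last n, ?_⟩
    filter_upwards [(continuous_apply j).continuousAt.eventually_lt continuousAt_const h] with y' hy' e
    have := lab_le y' j hy'
    rw [e] at this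
    exact absurd this (not_le.2 (Fin.castSucc_lt_last j))
  · refine ⟨j.castSucc, ?_⟩
    filter_upwards [continuousAt_const.eventually_lt (continuous_apply j).continuousAt h] with y' hy' e
    have := lab_mem y' j e.symm
    simp at hy'
    linarith

lemma near' {n : ℕ} {Y : Type*} [PseudoMetricSpace Y] {ι : Type*} {A : Set Y} {W : ι → Set Y} (hA : IsCompact A)
    (g : Y → (Fin n → ℝ))
    (hg : ContinuousOn g A) (hW : ∀ i, IsOpen (W i)) (hZ : ∀ x ∈ A, g x = 0 → ∃ i, x ∈ W i) :
    ∃ η > 0, ∀ x ∈ A, (∃ i, ball x η ⊆ W i) ∨ ∃ i, ∀ y ∈ A, y ∈ ball x η → lab (g y) ≠ i := by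
  have H : ∀ x ∈ A, ∃ U, IsOpen U ∧ x ∈ U ∧ ((∃ i, U ⊆ W i) ∨ ∃ i, ∀ y ∈ A, y ∈ U → lab (g y) ≠ i) := by
    intro x hx
    by_cases h : g x = 0
    · obtain ⟨i, hi⟩ := hZ x hx h
      exact ⟨W i, hW i, hi, Or.inl ⟨i, subset_rfl⟩⟩
    · obtain ⟨i, hi⟩ := lab_missing _ h
      have := (hg x hx).eventually hi
      rw [eventually_nhdsWithin_iff, _root_.eventually_nhds_iff] at this
      obtain ⟨U, h1, h2, h3⟩ := this
      exact ⟨U, h2, h3, Or.inr ⟨i, fun y hy hyU => h1 y hyU hy⟩⟩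
  choose! U h1 h2 h3 using H
  obtain ⟨η, hη, h⟩ := lebesgue_number_lemma_of_metric (s := A) (c := fun x : A => U x) hA
    (fun x => h1 x x.2) (fun x hx => Set.mem_iUnion.2 ⟨⟨x, hx⟩, h2 x hx⟩)
  refine ⟨η, hη, fun x hx => ?_⟩
  obtain ⟨⟨i, hi⟩, hb⟩ := h x hx
  rcases h3 i hi with ⟨k, h4⟩ | ⟨j, hj⟩
  · exact Or.inl ⟨k, hb.trans h4⟩
  · exact Or.inr ⟨j, fun y hy hyb => hj y hy (hb hyb)⟩

lemma near {n : ℕ} {Y : Type*} [PseudoMetricSpace Y] {A W : Set Y} (hA : IsCompact A) (g : Y → (Fin n → ℝ))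
    (hg : ContinuousOn g A) (hW : IsOpen W) (hZ : ∀ x ∈ A, g x = 0 → x ∈ W) :
    ∃ η > 0, ∀ x ∈ A, ball x η ⊆ W ∨ ∃ i, ∀ y ∈ A, y ∈ ball x η → lab (g y) ≠ i := by
  obtain ⟨η, hη, h⟩ := near' (W := fun _ : Unit => W) hA g hg (fun _ => hW) (fun x hx h => ⟨(), hZ x hx h⟩)
  refine ⟨η, hη, fun x hx => ?_⟩
  rcases h x hx with ⟨_, h⟩ | h
  · exact Or.inl h
  · exact Or.inr h

/-- scaled grid point -/
noncomputable def sc {n : ℕ} (N : ℕ) (v : Fin n → ℤ) : Fin n → ℝ := fun i => v i / N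

open Classical in
/-- the approximate degree at scale `N`. -/
noncomputable def cnt {n : ℕ} (N : ℕ) (A : Set (Fin n → ℝ)) (g : (Fin n → ℝ) → (Fin n → ℝ)) : ℤ :=
  ksum (fun v => (if ∀ k, sc N (v k) ∈ A then 1 else 0) * c0 (fun k => lab (g (sc N (v k)))))

lemma sc_dist {n : ℕ} (N : ℕ) (z : Fin n → ℤ) (σ : Equiv.Perm (Fin n)) (k l : Fin (n+1)) :
    dist (sc N (vtx z σ k)) (sc N (vtx z σ l)) ≤ 1 / N := by
  rw [dist_pi_le_iff (by positivity)]
  intro i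
  have h1 := vtx_bounds z σ k i
  have h2 := vtx_bounds z σ l i
  simp only [sc, Real.dist_eq, ← sub_div, abs_div, Nat.abs_cast]
  gcongr
  rw [← Int.cast_sub, ← Int.cast_abs]
  have : |vtx z σ k i - vtx z σ l i| ≤ 1 := by rw [abs_le]; omega
  exact_mod_cast this

lemma sc_finite {n : ℕ} (N : ℕ) (hN : 0 < N) (B : Set (Fin n → ℝ)) (hB : Bornology.IsBounded B) :
    {z : Fin n → ℤ | sc N z ∈ B}.Finite := by
  obtain ⟨R, hR⟩ := hB.subset_closedBall 0
  apply (Set.finite_Icc (fun _ => -⌈R * N⌉ : Fin n → ℤ) (fun _ => ⌈R * N⌉)).subset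
  intro z hz
  have hN' : (0:ℝ) < N := by exact_mod_cast hN
  have h : ∀ i, |(z i : ℝ)| ≤ R * N := by
    intro i
    have h1 : dist (sc N z) 0 ≤ R := hR hz
    have h2 := (dist_le_pi_dist (sc N z) 0 i).trans h1
    simp only [sc, Real.dist_eq, Pi.zero_apply, sub_zero, abs_div, Nat.abs_cast] at h2
    rwa [div_le_iff₀ hN'] at h2
  constructor
  · intro i
    have := (abs_le.1 (h i)).1
    have h3 := Int.le_ceil (R * N)
    have : (-⌈R * N⌉ : ℝ) ≤ z i := by linarith
    exact_mod_cast this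
  · intro i
    have := (abs_le.1 (h i)).2
    have h3 := Int.le_ceil (R * N)
    have : (z i : ℝ) ≤ ⌈R * N⌉ := by linarith
    exact_mod_cast this

lemma thick_mono {Y : Type*} [PseudoMetricSpace Y] {Z : Set Y} {p p' : Y} {r r' d : ℝ}
    (h : p ∈ thickening r Z) (hd : dist p' p ≤ d) (hr : r + d ≤ r') : p' ∈ thickening r' Z := by
  rw [mem_thickening_iff] at *
  obtain ⟨z, hz, hzd⟩ := h
  exact ⟨z, hz, by linarith [dist_triangle p' p z]⟩

open Classical in
lemma homotopy_step {m : ℕ} {A : Set (ℝ × (Fin (m+1) → ℝ))} (hA : IsCompact A)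
    (g : ℝ × (Fin (m+1) → ℝ) → (Fin (m+1) → ℝ)) (hg : ContinuousOn g A)
    (O : Set (ℝ × (Fin (m+1) → ℝ))) (hO : IsOpen O) (hZO : ∀ p ∈ A, g p = 0 → p ∈ O)
    (hOA : ∀ p ∈ O, p.1 ∈ Set.Icc (0:ℝ) 1 → p ∈ A) :
    ∃ η > 0, ∀ s ∈ Set.Icc (0:ℝ) 1, ∀ t ∈ Set.Icc (0:ℝ) 1, |s - t| < η → ∀ N : ℕ, 0 < N → (1 / N : ℝ) < η →
      cnt N {x | (s, x) ∈ A} (fun x => g (s, x)) = cnt N {x | (t, x) ∈ A} (fun x => g (t, x)) := by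
  set Z : Set (ℝ × (Fin (m+1) → ℝ)) := {p | p ∈ A ∧ g p = 0} with hZdef
  have hZc : IsCompact Z := by
    have : IsClosed Z := by
      have := hg.preimage_isClosed_of_isClosed hA.isClosed (isClosed_singleton (x := 0))
      exact this
    exact hA.of_isClosed_subset this (fun p hp => hp.1)
  obtain ⟨ε', hε', hth⟩ := hZc.exists_thickening_subset_open hO (fun p hp => hZO p hp.1 hp.2)
  obtain ⟨ε, hε, rfl⟩ : ∃ ε > 0, ε' = 4 * ε := ⟨ε' / 4, by positivity, by ring⟩
  obtain ⟨η, hη, hnear⟩ := near hA g hg (isOpen_thickening (δ := ε) (E := Z))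
    (fun p hp h0 => self_subset_thickening hε _ ⟨hp, h0⟩)
  refine ⟨min η ε, lt_min hη hε, ?_⟩
  intro s hs t ht hst N hN hNη
  have hstη := hst.trans_le (min_le_left _ _)
  have hstε := hst.trans_le (min_le_right _ _)
  have hNη' := hNη.trans_le (min_le_left _ _)
  have hNε := hNη.trans_le (min_le_right _ _)
  -- distances
  have hdist : ∀ (z : Fin (m+1) → ℤ) σ k l, ∀ a b : ℝ, (a = s ∨ a = t) → (b = s ∨ b = t) →
      ∀ r, |s - t| < r → (1/N : ℝ) < r → 
      dist (a, sc N (vtx z σ k)) (b, sc N (vtx z σ l)) < r := by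
    intro z σ k l a b ha hb r hr hr'
    rw [Prod.dist_eq]
    apply max_lt
    · have h0 : 0 < r := (abs_nonneg _).trans_lt hr
      rcases ha with rfl | rfl <;> rcases hb with rfl | rfl <;> simp [Real.dist_eq, h0, hr]
      rw [abs_sub_comm]; exact hr
    · exact (sc_dist N z σ k l).trans_lt hr'
  have alpha : ∀ z σ, ∀ τ : Fin (m+2) → ℝ, (∀ k, τ k = s ∨ τ k = t) →
      (∀ k, (τ k, sc N (vtx z σ k)) ∈ A) →
      Function.Surjective (fun k => lab (g (τ k, sc N (vtx z σ k)))) →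
      ∀ k, (τ k, sc N (vtx z σ k)) ∈ thickening ε Z := by
    intro z σ τ hτ hin hsurj k
    rcases hnear _ (hin 0) with h | ⟨i, hi⟩
    · exact h (hdist z σ k 0 _ _ (hτ _) (hτ _) _ hstη hNη')
    · obtain ⟨j, hj⟩ := hsurj i
      exact absurd hj (hi _ (hin j) (hdist z σ j 0 _ _ (hτ _) (hτ _) _ hstη hNη'))
  let w : (Fin (m+1) → ℤ) → ℤ := fun x => if (s, sc N x) ∈ thickening (3*ε) Z then 1 else 0
  have hwfin : (Function.support w).Finite := by
    have hb : Bornology.IsBounded (Prod.snd '' (thickening (3*ε) Z)) := by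
      exact Bornology.IsBounded.image_snd (hZc.isBounded.thickening (δ := 3*ε))
    apply (sc_finite N hN _ hb).subset
    intro x hx
    have : (s, sc N x) ∈ thickening (3*ε) Z := by
      by_contra h; apply hx; simp [w, h]
    exact ⟨_, this, rfl⟩
  have inA : ∀ z σ k l, ∀ a, (a = s ∨ a = t) → w (vtx z σ k) ≠ 0 → (a, sc N (vtx z σ l)) ∈ A := by
    intro z σ k l a ha hwk
    have h1 : (s, sc N (vtx z σ k)) ∈ thickening (3*ε) Z := by
      by_contra h; apply hwk; simp [w, h]
    have h2 : (a, sc N (vtx z σ l)) ∈ thickening (4*ε) Z :=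
      thick_mono h1 (hdist z σ l k a s ha (Or.inl rfl) ε hstε hNε).le (by linarith)
    apply hOA _ (hth h2)
    rcases ha with rfl | rfl
    · exact hs
    · exact ht
  have inw : ∀ z σ k l, ∀ a, (a = s ∨ a = t) → (a, sc N (vtx z σ l)) ∈ thickening ε Z → w (vtx z σ k) = 1 := by
    intro z σ k l a ha h
    have : (s, sc N (vtx z σ k)) ∈ thickening (3*ε) Z :=
      thick_mono h (hdist z σ k l s a (Or.inl rfl) ha ε hstε hNε).le (by linarith)
    simp [w, this]
  have beta : ∀ a, (a = s ∨ a = t) → cnt N {x | (a, x) ∈ A} (fun x => g (a, x)) =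
      ksum (fun v => w (v 0) * c0 ((fun x => lab (g (a, sc N x))) ∘ v)) := by
    intro a ha
    apply ksum_congr
    intro z σ
    by_cases hsurj : Function.Surjective (fun k => lab (g (a, sc N (vtx z σ k))))
    · congr 1
      split_ifs with hin
      · exact (inw z σ 0 0 a ha (alpha z σ (fun _ => a) (fun _ => ha) hin hsurj 0)).symm
      · by_contra hne
        exact hin fun k => inA z σ 0 k a ha (Ne.symm hne)
    · rw [c0_eq_zero _ hsurj, c0_eq_zero]
      · simp
      · exact hsurj
  rw [beta s (Or.inl rfl), beta t (Or.inr rfl)]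
  apply retag w hwfin
  intro z σ l hl ⟨k, hk⟩ hsurj
  have hw01 : ∃ j, w (vtx z σ j) ≠ 0 := by
    by_contra h; push Not at h
    exact hk (by rw [h, h])
  obtain ⟨j, hj⟩ := hw01
  have hτ : ∀ i, ∃ a, (a = s ∨ a = t) ∧ l (vtx z σ i) = lab (g (a, sc N (vtx z σ i))) := by
    intro i
    rcases hl (vtx z σ i) with h | h
    · exact ⟨s, Or.inl rfl, h⟩
    · exact ⟨t, Or.inr rfl, h⟩
  choose τ h1 h2 using hτ
  have hs' : Function.Surjective (fun k => lab (g (τ k, sc N (vtx z σ k)))) := by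
    have : (fun k => lab (g (τ k, sc N (vtx z σ k)))) = l ∘ vtx z σ := by
      ext i; rw [Function.comp, h2]
    rw [this]; exact hsurj
  have hall := alpha z σ τ h1 (fun i => inA z σ j i _ (h1 i) hj) hs'
  exact hk (by rw [inw z σ k 0 _ (h1 0) (hall 0), inw z σ 0 0 _ (h1 0) (hall 0)])

lemma homotopy {m : ℕ} {A : Set (ℝ × (Fin (m+1) → ℝ))} (hA : IsCompact A)
    (g : ℝ × (Fin (m+1) → ℝ) → (Fin (m+1) → ℝ)) (hg : ContinuousOn g A)
    (O : Set (ℝ × (Fin (m+1) → ℝ))) (hO : IsOpen O) (hZO : ∀ p ∈ A, g p = 0 → p ∈ O)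
    (hOA : ∀ p ∈ O, p.1 ∈ Set.Icc (0:ℝ) 1 → p ∈ A) :
    ∀ᶠ N : ℕ in Filter.atTop,
      cnt N {x | (0, x) ∈ A} (fun x => g (0, x)) = cnt N {x | (1, x) ∈ A} (fun x => g (1, x)) := by
  obtain ⟨η, hη, h⟩ := homotopy_step hA g hg O hO hZO hOA
  obtain ⟨K, hK⟩ := exists_nat_one_div_lt hη
  have hlim : ∀ᶠ N : ℕ in Filter.atTop, (1 / N : ℝ) < η :=
    tendsto_one_div_atTop_nhds_zero_nat.eventually (gt_mem_nhds hη)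
  filter_upwards [hlim, Filter.eventually_gt_atTop 0] with N h1 h2
  have hKpos : (0:ℝ) < K + 1 := by positivity
  have key : ∀ j : ℕ, j ≤ K + 1 → cnt N {x | (0, x) ∈ A} (fun x => g (0, x)) =
      cnt N {x | ((j / (K+1) : ℝ), x) ∈ A} (fun x => g ((j / (K+1) : ℝ), x)) := by
    intro j
    induction j with
    | zero => intro _; simp
    | succ j ih =>
      intro hj
      rw [ih (by omega)]
      have hj' : (j:ℝ) + 1 ≤ K + 1 := by exact_mod_cast hj
      apply h _ _ _ _ _ N h2 h1
      · exact ⟨by positivity, by rw [div_le_one hKpos]; linarith⟩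
      · exact ⟨by positivity, by rw [div_le_one hKpos]; push_cast; exact hj'⟩
      · rw [← sub_div]; push_cast
        rw [show (j:ℝ) - (j + 1) = -1 by ring, neg_div, abs_neg, abs_of_pos (by positivity)]
        exact hK
  have := key (K+1) le_rfl
  push_cast at this
  rwa [div_self hKpos.ne'] at this

end Newman
end

section
set_option autoImplicit false
namespace Newman
open Metric

open Classical in
lemma cnt_additive {n : ℕ} {A : Set (Fin n → ℝ)} (hA : IsCompact A) (g : (Fin n → ℝ) → (Fin n → ℝ))
    (hg : ContinuousOn g A) (p : ℕ) (B : ℕ → Set (Fin n → ℝ)) (W : ℕ → Set (Fin n → ℝ))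
    (hW : ∀ i, IsOpen (W i)) (hWB : ∀ i, W i ⊆ B i) (hBA : ∀ i < p, B i ⊆ A)
    (hdisj : ∀ i < p, ∀ j < p, i ≠ j → Disjoint (B i) (B j))
    (hZ : ∀ x ∈ A, g x = 0 → ∃ i < p, x ∈ W i) :
    ∀ᶠ N : ℕ in Filter.atTop, cnt N A g = ∑ i ∈ Finset.range p, cnt N (B i) g := by
  obtain ⟨η, hη, h⟩ := near' (W := fun i : Fin p => W i) hA g hg (fun i => hW i)
    (fun x hx h => by obtain ⟨i, hi, hx⟩ := hZ x hx h; exact ⟨⟨i, hi⟩, hx⟩)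
  have hlim : ∀ᶠ N : ℕ in Filter.atTop, (1 / N : ℝ) < η :=
    tendsto_one_div_atTop_nhds_zero_nat.eventually (gt_mem_nhds hη)
  filter_upwards [hlim, Filter.eventually_gt_atTop 0] with N h1 h2
  unfold cnt
  have hs := ksum_sum (Finset.range p) (F := fun i (v : Fin (n+1) → (Fin n → ℤ)) =>
    (if i < p ∧ ∀ k, sc N (v k) ∈ B i then 1 else 0) * c0 (fun k => lab (g (sc N (v k))))) _ (sc_finite N h2 A hA.isBounded)
    (by
      intro i z σ hz
      rw [if_neg, zero_mul]
      rintro ⟨hi, hk⟩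
      apply hz
      have := hBA i hi (hk 0)
      rwa [vtx_zero] at this)
  have e : ∀ i ∈ Finset.range p, ksum (fun (v : Fin (n+1) → (Fin n → ℤ)) =>
    (if ∀ k, sc N (v k) ∈ B i then 1 else 0) * c0 (fun k => lab (g (sc N (v k))))) = 
      ksum (fun (v : Fin (n+1) → (Fin n → ℤ)) =>
    (if i < p ∧ ∀ k, sc N (v k) ∈ B i then 1 else 0) * c0 (fun k => lab (g (sc N (v k))))) := by
    intro i hi
    simp [Finset.mem_range.1 hi]
  rw [Finset.sum_congr rfl e, ← hs]
  apply ksum_congr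
  intro z σ
  rw [← Finset.sum_mul]
  by_cases hsurj : Function.Surjective (fun k => lab (g (sc N (vtx z σ k))))
  · congr 1
    split_ifs with hin
    · have hd : ∀ k, sc N (vtx z σ k) ∈ ball (sc N (vtx z σ 0)) η := fun k =>
        (sc_dist N z σ k 0).trans_lt h1
      rcases h _ (hin 0) with ⟨i, hi⟩ | ⟨i, hi⟩
      · rw [Finset.sum_eq_single (i:ℕ)]
        · rw [if_pos ⟨i.2, fun k => hWB _ (hi (hd k))⟩]
        · intro j hj hji
          rw [if_neg]
          rintro ⟨hjp, hk⟩
          exact Set.disjoint_left.1 (hdisj j hjp i i.2 hji) (hk 0) (hWB _ (hi (hd 0)))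
        · intro hh; exact absurd (Finset.mem_range.2 i.2) hh
      · obtain ⟨j, hj⟩ := hsurj i
        exact absurd hj (hi _ (hin j) (hd j))
    · symm
      apply Finset.sum_eq_zero
      intro j hj
      rw [if_neg]
      rintro ⟨hjp, hk⟩
      exact hin fun k => hBA j hjp (hk k)
  · rw [c0_eq_zero _ hsurj]; simp

lemma lab_mono {n : ℕ} {y y' : Fin n → ℝ} (h : y ≤ y') : lab y ≤ lab y' := by
  rcases Fin.eq_castSucc_or_eq_last (lab y') with ⟨i, hi⟩ | hl
  · rw [hi]
    exact lab_le _ _ ((h i).trans_lt (lab_mem y' i hi.symm))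
  · rw [hl]; exact Fin.le_last _

open Classical in
lemma cnt_id {n : ℕ} {A : Set (Fin n → ℝ)} (q : Fin n → ℝ) (hA : A ∈ nhds q) :
    ∀ᶠ N : ℕ in Filter.atTop, cnt N A (fun x => x - q) = 1 := by
  obtain ⟨η, hη, hball⟩ := Metric.mem_nhds_iff.1 hA
  have hlim : ∀ᶠ N : ℕ in Filter.atTop, (1 / N : ℝ) < η :=
    tendsto_one_div_atTop_nhds_zero_nat.eventually (gt_mem_nhds hη)
  filter_upwards [hlim, Filter.eventually_gt_atTop 0] with N h1 h2
  have hN : (0:ℝ) < N := by exact_mod_cast h2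
  let c : Fin n → ℤ := fun i => ⌈N * q i⌉
  have hneg : ∀ (v : Fin n → ℤ) i, (sc N v - q) i < 0 ↔ v i < c i := by
    intro v i
    simp only [sc, Pi.sub_apply, sub_neg, c, Int.lt_ceil]
    rw [div_lt_iff₀ hN, mul_comm]
  have huniq : ∀ z σ, Function.Surjective (fun k => lab (sc N (vtx z σ k) - q)) →
      z = c - 1 ∧ σ = 1 := by
    intro z σ hs
    have hmono : Monotone (fun k => lab (sc N (vtx z σ k) - q)) := by
      intro k l hkl
      apply lab_mono
      intro i
      simp only [sc, Pi.sub_apply]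
      gcongr
      unfold vtx
      have : (k:ℕ) ≤ l := hkl
      split_ifs <;> (try omega)
    have hid : (fun k => lab (sc N (vtx z σ k) - q)) = id := by
      apply (StrictMono.range_inj (hmono.strictMono_of_injective (Finite.injective_iff_surjective.2 hs)) strictMono_id).1
      rw [hs.range_eq]; simp
    have hid' : ∀ k, lab (sc N (vtx z σ k) - q) = k := fun k => congrFun hid k
    have key : ∀ i, z i = c i - 1 ∧ (σ.symm i) = i := by
      intro i
      have a1 := (hneg _ _).1 (lab_mem _ i (hid' i.castSucc).symm)
      have a2 : ¬ (vtx z σ i.succ i < c i) := by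
        intro h
        have := lab_le _ _ ((hneg _ _).2 h)
        rw [hid'] at this
        exact absurd this (not_le.2 (Fin.castSucc_lt_succ))
      simp only [vtx, Fin.val_castSucc, Fin.val_succ] at a1 a2
      split_ifs at a1 a2 <;> first | omega | skip
    refine ⟨funext fun i => (key i).1, ?_⟩
    ext i
    have := (key i).2
    rw [Equiv.symm_apply_eq] at this
    simp [← this]
  have hlab : ∀ k, lab (sc N (vtx (c - 1) 1 k) - q) = k := by
    intro k
    have hiff : ∀ i, (sc N (vtx (c - 1) 1 k) - q) i < 0 ↔ k ≤ i.castSucc := by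
      intro i
      rw [hneg]
      simp only [vtx, Pi.sub_apply, Pi.one_apply, Equiv.Perm.coe_one, Fin.le_def, Fin.val_castSucc, Equiv.Perm.one_symm, id]
      split_ifs <;> constructor <;> intro <;> omega
    apply le_antisymm
    · rcases Fin.eq_castSucc_or_eq_last k with ⟨i, hi⟩ | hl
      · have := lab_le _ i ((hiff i).2 hi.le)
        rwa [← hi] at this
      · conv_rhs => rw [hl]
        exact Fin.le_last _
    · rcases Fin.eq_castSucc_or_eq_last (lab (sc N (vtx (c - 1) 1 k) - q)) with ⟨i, hi⟩ | hl
      · rw [hi]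
        exact (hiff i).1 (lab_mem _ _ hi.symm)
      · rw [hl]; exact Fin.le_last _
  have hin : ∀ k, sc N (vtx (c - 1) 1 k) ∈ A := by
    intro k
    apply hball
    rw [mem_ball]
    refine lt_of_le_of_lt ?_ h1
    rw [dist_pi_le_iff (by positivity)]
    intro i
    have hb := vtx_bounds (c-1) 1 k i
    have e1 := Int.le_ceil (N * q i)
    have e2 := Int.ceil_lt_add_one (N * q i)
    have b1 : ((c i : ℝ) - 1) ≤ vtx (c-1) 1 k i := by exact_mod_cast hb.1
    have b2 : (vtx (c-1) 1 k i : ℝ) ≤ c i - 1 + 1 := by exact_mod_cast hb.2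
    have : sc N (vtx (c - 1) 1 k) i - q i = (vtx (c-1) 1 k i - N * q i) / N := by
      simp only [sc]; field_simp
    rw [Real.dist_eq, this, abs_div, Nat.abs_cast]
    gcongr
    simp only [c] at b1 b2
    rw [abs_le]; constructor <;> linarith
  have hzero : ∀ z σ, ¬ (z = c - 1 ∧ σ = 1) → c0 (fun k => lab (sc N (vtx z σ k) - q)) = 0 := by
    intro z σ h
    exact c0_eq_zero _ fun hs => h (huniq z σ hs)
  unfold cnt ksum
  rw [finsum_eq_single _ (c - 1), Finset.sum_eq_single 1]
  · beta_reduce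
    rw [if_pos hin]
    simp only [hlab]
    rw [show (fun k : Fin (n+1) => k) = id from rfl, c0_id]
    simp
  · intro σ _ hσ
    beta_reduce
    rw [hzero _ _ (fun h => hσ h.2)]; simp
  · simp
  · intro z hz
    apply Finset.sum_eq_zero
    intro σ _
    beta_reduce
    rw [hzero _ _ (fun h => hz h.1)]; simp

end Newman
end

section
set_option autoImplicit false
namespace Newman
open Metric MeasureTheory

lemma approx_finite {n : ℕ} {C : Set (Fin n → ℝ)} (hC : IsCompact C) (F : (Fin n → ℝ) → (Fin n → ℝ))
    (hF : ContinuousOn F C) (ε : ℝ) (hε : 0 < ε) :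
    ∃ P : (Fin n → ℝ) → (Fin n → ℝ), Continuous P ∧ (∀ x ∈ C, ‖P x - F x‖ < ε) ∧
      {x ∈ C | P x = 0}.Finite := by
  obtain ⟨F1, hF1⟩ := ContinuousMap.exists_restrict_eq hC.isClosed (⟨C.domRestrict F, hF.domRestrict⟩ : C(C, Fin n → ℝ))
  have hF1' : ∀ x ∈ C, F1 x = F x := fun x hx => by
    have := DFunLike.congr_fun hF1 ⟨x, hx⟩
    exact this
  have huc : UniformContinuousOn F1 (cthickening 1 C) :=
    hC.cthickening.uniformContinuousOn_of_continuous F1.continuous.continuousOn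
  obtain ⟨δ, hδ, hfδ⟩ := Metric.uniformContinuousOn_iff.mp huc (ε / 4) (by positivity)
  obtain ⟨g, hgc, hg⟩ := F1.continuous.exists_contDiff_dist_le_of_forall_mem_ball_dist_le (lt_min hδ one_pos)
  have hg1 : ∀ x ∈ C, dist (g x) (F x) ≤ ε / 4 := by
    intro x hx
    rw [← hF1' x hx]
    apply hg
    intro y hy
    rw [mem_ball, lt_min_iff] at hy
    apply (hfδ y _ x _ hy.1).le
    · exact mem_cthickening_of_dist_le _ _ _ _ hx hy.2.le
    · exact self_subset_cthickening _ hx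
  have hsard : volume (g '' {x | (fderiv ℝ g x).det = 0}) = 0 :=
    addHaar_image_eq_zero_of_det_fderivWithin_eq_zero volume
      (f' := fun x => fderiv ℝ g x)
      (fun x _ => ((hgc.differentiable (by simp)) x).hasFDerivAt.hasFDerivWithinAt) (fun x hx => hx)
  obtain ⟨w, hw, hw'⟩ : ∃ w ∈ ball (0 : Fin n → ℝ) (ε/4), w ∉ g '' {x | (fderiv ℝ g x).det = 0} := by
    by_contra hcon
    push Not at hcon
    have h1 := measure_mono (μ := volume) hcon
    rw [hsard] at h1
    exact absurd h1 (not_le.2 (measure_ball_pos _ _ (by positivity)))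
  refine ⟨fun x => g x - w, hgc.continuous.sub continuous_const, ?_, ?_⟩
  · intro x hx
    have h1 := hg1 x hx
    rw [dist_eq_norm] at h1
    rw [mem_ball_zero_iff] at hw
    calc ‖g x - w - F x‖ = ‖(g x - F x) - w‖ := by congr 1; abel
      _ ≤ ‖g x - F x‖ + ‖w‖ := norm_sub_le _ _
      _ < ε := by linarith
  · set Z := {x ∈ C | g x - w = 0} with hZ
    have hZc : IsCompact Z := hC.inter_right (isClosed_eq (hgc.continuous.sub continuous_const) continuous_const)
    have hU : ∀ x ∈ Z, ∃ U ∈ nhds x, ∀ y ∈ U, y ∈ Z → y = x := by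
      intro x hx
      have hxw : g x = w := sub_eq_zero.1 hx.2
      have hdet : (fderiv ℝ g x).det ≠ 0 := fun h => hw' ⟨x, h, hxw⟩
      have hs : HasStrictFDerivAt g ((fderiv ℝ g x).toContinuousLinearEquivOfDetNeZero hdet : (Fin n → ℝ) →L[ℝ] (Fin n → ℝ)) x := by
        rw [ContinuousLinearMap.coe_toContinuousLinearEquivOfDetNeZero]
        exact hgc.contDiffAt.hasStrictFDerivAt (by simp)
      refine ⟨_, hs.eventually_left_inverse, ?_⟩
      intro y hy hyZ
      have hyw : g y = w := sub_eq_zero.1 hyZ.2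
      have hx' := hs.eventually_left_inverse.self_of_nhds
      have hy' : _ = y := hy
      rw [hyw] at hy'
      rw [hxw] at hx'
      exact hy'.symm.trans hx'
    choose! U hU1 hU2 using hU
    obtain ⟨t, ht1, ht2⟩ := hZc.elim_nhds_subcover U hU1
    refine t.finite_toSet.subset ?_
    intro y hy
    obtain ⟨x, hx, hyx⟩ := Set.mem_iUnion₂.1 (ht2 hy)
    rw [hU2 x (ht1 x hx) y hyx hy]; exact hx

end Newman
end

section
set_option autoImplicit false
namespace Newman
open Metric Function

/-- A free cyclic action of order `p` generated by `h`. -/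
structure FreeCyc {X : Type*} [TopologicalSpace X] (h : X → X) (p : ℕ) : Prop where
  cont : Continuous h
  pos : 0 < p
  per : ∀ x, h^[p] x = x
  free : ∀ x, ∀ i, 0 < i → i < p → h^[i] x ≠ x

section
variable {X : Type*} [TopologicalSpace X] {h : X → X} {p : ℕ}

lemma FreeCyc.back (H : FreeCyc h p) (i : ℕ) (hi : i ≤ p) (x : X) : h^[p - i] (h^[i] x) = x := by
  rw [← iterate_add_apply, Nat.sub_add_cancel hi, H.per]

lemma iter_inv (P : X → Prop) (hP : ∀ x, P x → P (h x)) (i : ℕ) (x : X) (hx : P x) : P (h^[i] x) := by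
  induction i with
  | zero => exact hx
  | succ k ih => rw [iterate_succ_apply']; exact hP _ ih

lemma iter_eq {Y : Type*} (F : X → Y) (hF : ∀ x, F (h x) = F x) (i : ℕ) (x : X) : F (h^[i] x) = F x := by
  induction i with
  | zero => rfl
  | succ k ih => rw [iterate_succ_apply', hF]; exact ih

lemma sep_open [T2Space X] (H : FreeCyc h p) (L : Set X) (hL : IsCompact L)
    (hfree : ∀ z ∈ L, ∀ i, 0 < i → i < p → h^[i] z ∉ L) :
    ∃ O, IsOpen O ∧ L ⊆ O ∧ ∀ z ∈ O, ∀ i, 0 < i → i < p → h^[i] z ∉ O := by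
  have H1 : ∀ i, 0 < i → i < p → ∃ O, IsOpen O ∧ L ⊆ O ∧ ∀ z ∈ O, h^[i] z ∉ O := by
    intro i h0 hi
    obtain ⟨U, W, hU, hW, hLU, hLW, hd⟩ := SeparatedNhds.of_isCompact_isCompact hL
      (hL.image (H.cont.iterate i)) (by
        rw [Set.disjoint_left]
        rintro z hz ⟨w, hw, rfl⟩
        exact hfree w hw i h0 hi hz)
    refine ⟨U ∩ h^[i] ⁻¹' W, hU.inter (hW.preimage (H.cont.iterate i)), ?_, ?_⟩
    · intro z hz
      exact ⟨hLU hz, hLW ⟨z, hz, rfl⟩⟩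
    · rintro z ⟨_, hz⟩ ⟨hz', _⟩
      exact Set.disjoint_left.1 hd hz' hz
  choose! O h1 h2 h3 using H1
  refine ⟨⋂ i ∈ Finset.Ioo 0 p, O i, ?_, ?_, ?_⟩
  · apply isOpen_biInter_finset
    intro i hi
    rw [Finset.mem_Ioo] at hi
    exact h1 i hi.1 hi.2
  · apply Set.subset_iInter₂
    intro i hi
    rw [Finset.mem_Ioo] at hi
    exact h2 i hi.1 hi.2
  · intro z hz i h0 hi hz'
    rw [Set.mem_iInter₂] at hz hz'
    have hm : i ∈ Finset.Ioo 0 p := Finset.mem_Ioo.2 ⟨h0, hi⟩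
    exact h3 i h0 hi z (hz i hm) (hz' i hm)

lemma perturb_aux {n : ℕ} [T2Space X] [LocallyCompactSpace X] (H : FreeCyc h p)
    (hX : ∀ C : Set X, IsCompact C → ∀ F : X → (Fin n → ℝ), Continuous F → ∀ ε > (0:ℝ),
      ∃ P : X → (Fin n → ℝ), Continuous P ∧ (∀ x ∈ C, ‖P x - F x‖ < ε) ∧ {x ∈ C | P x = 0}.Finite)
    (F : X → (Fin n → ℝ)) (hF : Continuous F) (hFh : ∀ x, F (h x) = F x)
    (K : Set X) (hK : IsCompact K) (hKh : ∀ x ∈ K, h x ∈ K)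
    (C D : X → Set X) (hC : ∀ x, IsCompact (C x)) (hD : ∀ x, IsCompact (D x))
    (hCD : ∀ x, C x ⊆ interior (D x)) (hDf : ∀ x, ∀ z ∈ D x, ∀ i, 0 < i → i < p → h^[i] z ∉ D x)
    (t : Finset X) : ∀ ε > (0:ℝ), 
    ∃ θ : X → (Fin n → ℝ), Continuous θ ∧ (∀ x, θ (h x) = θ x) ∧ (∀ x, ‖θ x‖ ≤ ε) ∧
      (∃ S, IsCompact S ∧ ∀ x, x ∉ S → θ x = 0) ∧
      ∃ L, IsCompact L ∧ (∀ z ∈ K, (∃ i < p, ∃ j ∈ t, h^[i] z ∈ C j) → F z + θ z = 0 → ∃ i < p, h^[i] z ∈ L) ∧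
        (∀ z ∈ L, z ∈ K ∧ F z + θ z = 0) ∧ 
        ∀ z ∈ L, ∀ i, 0 < i → i < p → h^[i] z ∉ L := by
  classical
  induction t using Finset.induction_on with
  | empty => 
    intro ε hε
    refine ⟨fun _ => 0, continuous_const, fun _ => rfl, fun _ => by simpa using hε.le, ⟨∅, isCompact_empty, fun _ _ => rfl⟩,
      ∅, isCompact_empty, ?_, ?_, ?_⟩ <;> simp
  | insert j t hj ih => 
    intro ε hε
    obtain ⟨θ, hθc, hθh, hθε, ⟨S, hS, hθS⟩, L, hL, hLcov, hLz, hLf⟩ := ih (ε/2) (by positivity)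
    obtain ⟨O, hO, hLO, hOf⟩ := sep_open H L hL hLf
    have hci : ∀ i, Continuous (h^[i]) := fun i => H.cont.iterate i
    -- the covered part of K
    set Kt : Set X := {x ∈ K | ∃ i < p, ∃ j ∈ t, h^[i] x ∈ C j} with hKt
    have hKtc : IsCompact Kt := by
      have : Kt = K ∩ ⋃ i ∈ Finset.range p, ⋃ j ∈ t, h^[i] ⁻¹' (C j) := by
        ext x; simp [hKt]
      rw [this]
      apply hK.inter_right
      apply isClosed_biUnion_finset
      intro i _
      apply isClosed_biUnion_finset
      intro j _
      exact (hC j).isClosed.preimage (hci i)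
    have hKth : ∀ x ∈ Kt, h x ∈ Kt := by
      rintro x ⟨hxK, i, hi, j, hj, hx⟩
      refine ⟨hKh x hxK, ?_⟩
      rcases Nat.eq_zero_or_pos i with rfl | h0
      · refine ⟨p - 1, by have := H.pos; omega, j, hj, ?_⟩
        rw [← iterate_succ_apply, Nat.succ_eq_add_one, Nat.sub_add_cancel H.pos, H.per]; exact hx
      · refine ⟨i - 1, by omega, j, hj, ?_⟩
        rw [← iterate_succ_apply, Nat.succ_eq_add_one, Nat.sub_add_cancel h0]; exact hx
    have hKthi : ∀ i x, x ∈ Kt → h^[i] x ∈ Kt := fun i x hx => iter_inv (· ∈ Kt) hKth i x hx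
    have hKhi : ∀ i x, x ∈ K → h^[i] x ∈ K := fun i x hx => iter_inv (· ∈ K) hKh i x hx
    obtain ⟨η, hη, hηQ⟩ : ∃ η > (0:ℝ), ∀ x ∈ Kt, (∀ i < p, h^[i] x ∉ O) → η ≤ ‖F x + θ x‖ := by
      set Q : Set X := Kt \ ⋃ i ∈ Finset.range p, h^[i] ⁻¹' O with hQ
      have hQc : IsCompact Q := hKtc.diff (isOpen_biUnion fun i _ => hO.preimage (hci i))
      have hmem : ∀ x ∈ Kt, (∀ i < p, h^[i] x ∉ O) → x ∈ Q := by
        intro x hx h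
        refine ⟨hx, ?_⟩
        simp only [Set.mem_iUnion, not_exists, Finset.mem_range]
        exact h
      rcases Q.eq_empty_or_nonempty with he | hne
      · refine ⟨1, one_pos, fun x hx h => ?_⟩
        have := hmem x hx h
        rw [he] at this; exact absurd this (Set.notMem_empty _)
      · obtain ⟨x0, hx0, hmin⟩ := hQc.exists_isMinOn hne ((hF.add hθc).norm.continuousOn)
        refine ⟨‖F x0 + θ x0‖, ?_, fun x hx h => hmin (hmem x hx h)⟩
        rw [gt_iff_lt, norm_pos_iff]
        intro h0
        obtain ⟨i, hi, hiL⟩ := hLcov x0 hx0.1.1 hx0.1.2 h0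
        apply hx0.2
        simp only [Set.mem_iUnion, Finset.mem_range]
        exact ⟨i, hi, hLO hiL⟩
    have hp0 : (0:ℝ) < p := by exact_mod_cast H.pos
    set ε' := min (ε/2) (η/2) with hε'
    have hε'0 : 0 < ε' := lt_min (by positivity) (by positivity)
    obtain ⟨P, hP, hPa, hPf⟩ := hX (D j) (hD j) (fun x => F x + θ x) (hF.add hθc) (ε'/p) (by positivity)
    obtain ⟨ψ, hψ1, hψ0, -, hψ⟩ := exists_continuous_one_zero_of_isCompact (hC j) 
      (isOpen_interior (s := D j)).isClosed_compl (Set.disjoint_compl_right_iff_subset.2 (hCD j))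
    set θb : X → (Fin n → ℝ) := fun x => ψ x • (P x - (F x + θ x)) with hθb
    have hθbc : Continuous θb := ψ.continuous.smul (hP.sub (hF.add hθc))
    have hθb0 : ∀ x, x ∉ D j → θb x = 0 := by
      intro x hx
      have : ψ x = 0 := hψ0 (fun h => hx (interior_subset h))
      simp [hθb, this]
    have hθbn : ∀ x, ‖θb x‖ ≤ ε'/p := by
      intro x
      by_cases hx : x ∈ D j
      · rw [hθb]
        simp only [norm_smul, Real.norm_eq_abs, abs_of_nonneg (hψ x).1]
        calc ψ x * ‖P x - (F x + θ x)‖ ≤ 1 * (ε'/p) := by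
              gcongr
              · exact (hψ x).2
              · exact (hPa x hx).le
          _ = _ := one_mul _
      · rw [hθb0 x hx, norm_zero]; positivity
    set Θ : X → (Fin n → ℝ) := fun x => ∑ i ∈ Finset.range p, θb (h^[i] x) with hΘ
    have hΘc : Continuous Θ := continuous_finset_sum _ fun i _ => hθbc.comp (hci i)
    have hΘh : ∀ x, Θ (h x) = Θ x := by
      intro x
      simp only [hΘ, ← iterate_succ_apply]
      have e1 := Finset.sum_range_succ (fun i => θb (h^[i] x)) p
      have e2 := Finset.sum_range_succ' (fun i => θb (h^[i] x)) p
      rw [e1] at e2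
      rw [H.per] at e2
      simpa using e2.symm
    have hΘn : ∀ x, ‖Θ x‖ ≤ ε' := by
      intro x
      calc ‖Θ x‖ ≤ ∑ i ∈ Finset.range p, (ε'/p) := norm_sum_le_of_le _ fun i _ => hθbn _
        _ = ε' := by rw [Finset.sum_const, Finset.card_range, nsmul_eq_mul]; field_simp
    set θ' : X → (Fin n → ℝ) := fun x => θ x + Θ x with hθ'
    have hθ'c : Continuous θ' := hθc.add hΘc
    have hθ'h : ∀ x, θ' (h x) = θ' x := fun x => by simp only [hθ', hθh, hΘh]
    have hFθ' : ∀ x, F (h x) + θ' (h x) = F x + θ' x := fun x => by rw [hFh, hθ'h]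
    have hCP : ∀ x ∈ C j, F x + θ' x = P x := by
      intro x hx
      have hΘx : Θ x = θb x := by
        simp only [hΘ]
        rw [Finset.sum_eq_single 0]
        · rfl
        · intro i hi h0
          apply hθb0
          exact hDf j x (interior_subset (hCD j hx)) i (Nat.pos_of_ne_zero h0) (Finset.mem_range.1 hi)
        · intro h; exact absurd (Finset.mem_range.2 H.pos) h
      have h1 : ψ x = 1 := hψ1 hx
      simp only [hθ', hΘx, hθb, h1, one_smul]
      abel
    set Z' : Set X := {z ∈ Kt | F z + θ' z = 0} with hZ'
    have hZ'c : IsCompact Z' := hKtc.inter_right (isClosed_eq (hF.add hθ'c) continuous_const)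
    have hZ'O : ∀ z ∈ Z', ∃ i < p, h^[i] z ∈ O := by
      intro z hz
      by_contra hcon
      push Not at hcon
      have h1 := hηQ z hz.1 hcon
      have h2 : F z + θ z = - Θ z := by
        have := hz.2
        simp only [hθ'] at this
        rw [← add_assoc] at this
        exact eq_neg_of_add_eq_zero_left this
      rw [h2, norm_neg] at h1
      have := hΘn z
      have := min_le_right (ε/2) (η/2)
      linarith
    refine ⟨θ', hθ'c, hθ'h, ?_, ?_, ?_⟩
    · intro x
      calc ‖θ x + Θ x‖ ≤ ‖θ x‖ + ‖Θ x‖ := norm_add_le _ _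
        _ ≤ ε/2 + ε/2 := add_le_add (hθε x) ((hΘn x).trans (min_le_left _ _))
        _ = ε := by ring
    · refine ⟨S ∪ ⋃ i ∈ Finset.range p, h^[p - i] '' (D j), hS.union ?_, ?_⟩
      · exact (Finset.range p).isCompact_biUnion fun i _ => (hD j).image (hci _)
      · intro x hx
        simp only [Set.mem_union, Set.mem_iUnion, not_or, not_exists, Finset.mem_range] at hx
        simp only [hθ']
        rw [hθS x hx.1, zero_add]
        apply Finset.sum_eq_zero
        intro i hi
        apply hθb0
        intro hxi
        apply hx.2 i (Finset.mem_range.1 hi)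
        exact ⟨_, hxi, H.back i (Finset.mem_range.1 hi).le x⟩
    · set L1 : Set X := Z' \ ⋃ i ∈ Finset.Ioo 0 p, h^[i] ⁻¹' O with hL1
      set L2 : Set X := {x ∈ C j | P x = 0} ∩ (K \ Kt) with hL2
      have hL1O : ∀ z, z ∈ L1 ↔ z ∈ Z' ∧ z ∈ O := by
        intro z
        simp only [hL1, Set.mem_diff, Set.mem_iUnion, not_exists, Finset.mem_Ioo, Set.mem_preimage]
        constructor
        · rintro ⟨hz, h⟩
          refine ⟨hz, ?_⟩
          obtain ⟨i, hi, hiO⟩ := hZ'O z hz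
          rcases Nat.eq_zero_or_pos i with rfl | h0
          · exact hiO
          · exact absurd hiO (h i ⟨h0, hi⟩)
        · rintro ⟨hz, h⟩
          exact ⟨hz, fun i hi => hOf z h i hi.1 hi.2⟩
      refine ⟨L1 ∪ L2, ?_, ?_, ?_, ?_⟩
      · refine IsCompact.union (hZ'c.diff (isOpen_biUnion fun i _ => hO.preimage (hci i))) ?_
        apply Set.Finite.isCompact
        apply hPf.subset
        rintro x ⟨⟨hx, h0⟩, _⟩
        exact ⟨interior_subset (hCD j hx), h0⟩
      · intro z hzK hz h0
        by_cases hzt : z ∈ Kt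
        · obtain ⟨i, hi, hiO⟩ := hZ'O z ⟨hzt, h0⟩
          refine ⟨i, hi, Or.inl ((hL1O _).2 ⟨⟨hKthi i z hzt, ?_⟩, hiO⟩)⟩
          rw [← h0]
          exact iter_eq (fun x => F x + θ' x) hFθ' i z
        · obtain ⟨i, hi, j', hj', hzj⟩ := hz
          rw [Finset.mem_insert] at hj'
          rcases hj' with rfl | hj'
          · refine ⟨i, hi, Or.inr ⟨⟨hzj, ?_⟩, hKhi i z hzK, ?_⟩⟩
            · rw [← hCP _ hzj, ← h0]
              exact iter_eq (fun x => F x + θ' x) hFθ' i z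
            · intro hh
              apply hzt
              have := hKthi (p - i) _ hh
              rwa [H.back i hi.le] at this
          · exact absurd ⟨hzK, i, hi, j', hj', hzj⟩ hzt
      · rintro z (hz | hz)
        · exact ⟨hz.1.1.1, hz.1.2⟩
        · refine ⟨hz.2.1, ?_⟩
          rw [hCP _ hz.1.1]; exact hz.1.2
      · rintro z (hz | hz) i h0 hi (hz' | hz')
        · exact hOf z ((hL1O z).1 hz).2 i h0 hi ((hL1O _).1 hz').2
        · exact hz'.2.2 (hKthi i z hz.1.1)
        · apply hz.2.2
          have := hKthi (p - i) _ hz'.1.1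
          rwa [H.back i hi.le] at this
        · exact hDf j z (interior_subset (hCD j hz.1.1)) i h0 hi (interior_subset (hCD j hz'.1.1))

lemma perturb {n : ℕ} [T2Space X] [LocallyCompactSpace X] (H : FreeCyc h p)
    (hX : ∀ C : Set X, IsCompact C → ∀ F : X → (Fin n → ℝ), Continuous F → ∀ ε > (0:ℝ),
      ∃ P : X → (Fin n → ℝ), Continuous P ∧ (∀ x ∈ C, ‖P x - F x‖ < ε) ∧ {x ∈ C | P x = 0}.Finite)
    (F : X → (Fin n → ℝ)) (hF : Continuous F) (hFh : ∀ x, F (h x) = F x)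
    (K : Set X) (hK : IsCompact K) (hKh : ∀ x ∈ K, h x ∈ K) : ∀ ε > (0:ℝ), 
    ∃ θ : X → (Fin n → ℝ), Continuous θ ∧ (∀ x, θ (h x) = θ x) ∧ (∀ x, ‖θ x‖ ≤ ε) ∧
      (∃ S, IsCompact S ∧ ∀ x, x ∉ S → θ x = 0) ∧
      ∃ L, IsCompact L ∧ (∀ z ∈ K, F z + θ z = 0 → ∃ i < p, h^[i] z ∈ L) ∧
        (∀ z ∈ L, z ∈ K ∧ F z + θ z = 0) ∧ 
        ∀ z ∈ L, ∀ i, 0 < i → i < p → h^[i] z ∉ L := by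
  have H1 : ∀ x : X, ∃ C D : Set X, IsCompact C ∧ IsCompact D ∧ C ∈ nhds x ∧ C ⊆ interior D ∧
      ∀ z ∈ D, ∀ i, 0 < i → i < p → h^[i] z ∉ D := by
    intro x
    obtain ⟨O, hO, hxO, hOf⟩ := sep_open H {x} isCompact_singleton (by
      rintro z rfl i h0 hi
      exact H.free z i h0 hi)
    obtain ⟨D, hD, hxD, hDO⟩ := exists_compact_subset hO (hxO rfl)
    obtain ⟨C, hC, hxC, hCD⟩ := exists_compact_subset isOpen_interior hxD
    exact ⟨C, D, hC, hD, mem_interior_iff_mem_nhds.1 hxC, hCD, fun z hz i h0 hi hz' => hOf z (hDO hz) i h0 hi (hDO hz')⟩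
  choose C D hC hD hxC hCD hDf using H1
  obtain ⟨t, -, ht⟩ := hK.elim_nhds_subcover C (fun x _ => hxC x)
  intro ε hε
  obtain ⟨θ, h1, h2, h3, h4, L, h5, h6, h7, h8⟩ := perturb_aux H hX F hF hFh K hK hKh C D hC hD hCD hDf t ε hε
  refine ⟨θ, h1, h2, h3, h4, L, h5, ?_, h7, h8⟩
  intro z hz
  apply h6 z hz
  obtain ⟨j, hj, hzj⟩ := Set.mem_iUnion₂.1 (ht hz)
  exact ⟨0, H.pos, j, hj, hzj⟩

end
end Newman
end

section
set_option autoImplicit false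
namespace Newman
open Metric Function

lemma cnt_congr {n : ℕ} (N : ℕ) (A : Set (Fin n → ℝ)) (g g' : (Fin n → ℝ) → (Fin n → ℝ))
    (h : ∀ x ∈ A, g x = g' x) : cnt N A g = cnt N A g' := by
  classical
  unfold cnt
  apply ksum_congr
  intro z σ
  by_cases hk : ∀ k, sc N (vtx z σ k) ∈ A
  · rw [if_pos hk]
    congr 2
    funext k
    rw [h _ (hk k)]
  · rw [if_neg hk]; simp

lemma approx_sub {n : ℕ} (X : Set (Fin n → ℝ)) : ∀ C : Set X, IsCompact C → ∀ F : X → (Fin n → ℝ), Continuous F → ∀ ε > (0:ℝ),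
      ∃ P : X → (Fin n → ℝ), Continuous P ∧ (∀ x ∈ C, ‖P x - F x‖ < ε) ∧ {x ∈ C | P x = 0}.Finite := by
  classical
  intro C hC F hF ε hε
  set F' : (Fin n → ℝ) → (Fin n → ℝ) := fun x => if h : x ∈ X then F ⟨x, h⟩ else 0 with hF'
  have e : ∀ x : X, F' x = F x := fun x => by simp [hF']
  obtain ⟨P, h1, h2, h3⟩ := approx_finite (hC.image continuous_subtype_val) F' (by
    have hc : ContinuousOn F' X := by
      rw [continuousOn_iff_continuous_domRestrict]
      convert hF using 1
      funext x; exact e x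
    apply hc.mono
    rintro _ ⟨x, _, rfl⟩; exact x.2) ε hε
  refine ⟨fun x => P x, h1.comp continuous_subtype_val, ?_, ?_⟩
  · intro x hx
    rw [← e x]
    exact h2 x ⟨x, hx, rfl⟩
  · refine (h3.preimage (Subtype.val_injective.injOn)).subset ?_
    rintro x ⟨hx, h0⟩
    exact ⟨⟨x, hx, rfl⟩, h0⟩

lemma ext_zero {n : ℕ} {X : Set (Fin n → ℝ)} (hX : IsOpen X) (θ : X → (Fin n → ℝ)) (hθ : Continuous θ)
    (S : Set X) (hS : IsCompact S) (h0 : ∀ x, x ∉ S → θ x = 0) :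
    ∃ θ' : (Fin n → ℝ) → (Fin n → ℝ), Continuous θ' ∧ (∀ x : X, θ' x = θ x) ∧ ∀ x, x ∉ X → θ' x = 0 := by
  classical
  set F' : (Fin n → ℝ) → (Fin n → ℝ) := fun x => if h : x ∈ X then θ ⟨x, h⟩ else 0 with hF'
  have e : ∀ x : X, F' x = θ x := fun x => by simp [hF']
  have e0 : ∀ x, x ∉ X → F' x = 0 := fun x hx => by simp [hF', hx]
  refine ⟨F', ?_, e, e0⟩
  rw [continuous_iff_continuousAt]
  intro x
  by_cases hx : x ∈ X
  · have hc : ContinuousOn F' X := by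
      rw [continuousOn_iff_continuous_domRestrict]
      convert hθ using 1
      funext x; exact e x
    exact hc.continuousAt (hX.mem_nhds hx)
  · have hcl : IsClosed (Subtype.val '' S : Set (Fin n → ℝ)) := (hS.image continuous_subtype_val).isClosed
    have : ∀ᶠ y in nhds x, F' y = 0 := by
      filter_upwards [hcl.isOpen_compl.mem_nhds (show x ∈ (Subtype.val '' S)ᶜ by
        rintro ⟨y, _, rfl⟩; exact hx y.2)] with y hy
      by_cases hyX : y ∈ X
      · rw [e ⟨y, hyX⟩]
        apply h0
        intro h; exact hy ⟨_, h, rfl⟩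
      · exact e0 y hyX
    exact (continuousAt_const (y := (0 : Fin n → ℝ))).congr (by filter_upwards [this] with y hy; exact hy.symm)

lemma per_coprime {α : Type*} (h : α → α) (x : α) (p i : ℕ) (hp : p.Prime) (h1 : h^[p] x = x) (h0 : 0 < i) (hi : i < p)
    (h2 : h^[i] x = x) : h x = x := by
  have a1 : IsPeriodicPt h p x := h1
  have a2 : IsPeriodicPt h i x := h2
  have := a1.gcd a2
  rw [(Nat.Coprime.gcd_eq_one ((Nat.Prime.coprime_iff_not_dvd hp).2 (Nat.not_dvd_of_pos_of_lt h0 hi)))] at this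
  exact this

lemma contOn_iter {α : Type*} [TopologicalSpace α] {V : Set α} {h : α → α} (hm : Set.MapsTo h V V) (hc : ContinuousOn h V)
    (i : ℕ) : ContinuousOn (h^[i]) V := by
  induction i with
  | zero => exact continuousOn_id
  | succ k ih => rw [iterate_succ]; exact ih.comp hc hm

lemma core {m : ℕ} {V : Set (Fin (m+1) → ℝ)} (hV : IsOpen V) (h : (Fin (m+1) → ℝ) → (Fin (m+1) → ℝ))
    (hm : Set.MapsTo h V V) (hc : ContinuousOn h V) (p : ℕ) (hp : p.Prime) (hper : ∀ x ∈ V, h^[p] x = x)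
    (h0V : (0 : Fin (m+1) → ℝ) ∈ V) (h00 : h 0 = 0) (ℓ : (Fin (m+1) → ℝ) →L[ℝ] ℝ) (c : ℝ) (hc0 : 0 < c)
    (hℓ : ∀ x ∈ V, h x ≠ x → c * ‖x‖^2 ≤ ℓ x) : ∀ᶠ x in nhds 0, h x = x := by
  classical
  by_contra hcon
  have hp0 : (0:ℝ) < p := by exact_mod_cast hp.pos
  have hmi : ∀ i, Set.MapsTo (h^[i]) V V := fun i => hm.iterate i
  have hci : ∀ i, ContinuousOn (h^[i]) V := contOn_iter hm hc
  set X : Set (Fin (m+1) → ℝ) := {x ∈ V | h x ≠ x} with hX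
  have hXV : X ⊆ V := fun x hx => hx.1
  have hXo : IsOpen X := by
    have := (hc.sub continuousOn_id).isOpen_inter_preimage hV (isOpen_compl_singleton (x := (0 : Fin (m+1) → ℝ)))
    convert this using 1
    ext x; simp [hX, sub_eq_zero]
  have hXm : Set.MapsTo h X X := by
    intro x hx
    refine ⟨hm hx.1, fun he => hx.2 ?_⟩
    have h1 : h^[p-1] (h x) = x := by
      rw [← iterate_succ_apply, Nat.succ_eq_add_one, Nat.sub_add_cancel hp.pos, hper x hx.1]
    have h2 : h^[p-1] (h x) = h x := iterate_fixed he _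
    exact h2.symm.trans h1
  have hXmi : ∀ i, Set.MapsTo (h^[i]) X X := fun i => hXm.iterate i
  have hfix : ∀ x ∈ V, x ∉ X → h x = x := fun x hx hxX => by
    by_contra h; exact hxX ⟨hx, h⟩
  have hfixi : ∀ x ∈ V, x ∉ X → ∀ i, h^[i] x = x := fun x hx hxX i => iterate_fixed (hfix x hx hxX) i
  have hℓ0 : ∀ x ∈ X, 0 ≤ ℓ x := fun x hx => le_trans (by positivity) (hℓ x hx.1 hx.2)
  have hback : ∀ x ∈ V, ∀ i ≤ p, h^[p - i] (h^[i] x) = x := fun x hx i hi => by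
    rw [← iterate_add_apply, Nat.sub_add_cancel hi, hper x hx]
  obtain ⟨ρ, hρ, hρV⟩ := Metric.nhds_basis_closedBall.mem_iff.1 (hV.mem_nhds h0V)
  have hsmall : ∀ r > 0, ∀ x ∈ X, ℓ x < c * r^2 → ‖x‖ < r := by
    intro r hr x hx hlt
    have h1 := (hℓ x hx.1 hx.2).trans_lt hlt
    have h2 : ‖x‖^2 < r^2 := lt_of_mul_lt_mul_left h1 hc0.le
    exact lt_of_pow_lt_pow_left₀ 2 hr.le h2
  obtain ⟨δ, hδ, hδρ, hδi⟩ : ∃ δ > 0, (∀ x ∈ X, ℓ x < δ → ‖x‖ < ρ) ∧ 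
      (∀ x ∈ X, ℓ x < δ → ∀ i ≤ p, ‖h^[i] x‖ < ρ) := by
    have : ∀ᶠ y in nhds (0 : Fin (m+1) → ℝ), ∀ i ∈ Finset.range (p+1), ‖h^[i] y‖ < ρ := by
      rw [Filter.eventually_all_finset]
      intro i _
      have h1 : ContinuousAt (fun y => ‖h^[i] y‖) 0 := ((hci i).continuousAt (hV.mem_nhds h0V)).norm
      apply h1.eventually_lt continuousAt_const
      simp only [iterate_fixed h00 i, norm_zero, hρ]
    obtain ⟨r, hr, hrb⟩ := Metric.eventually_nhds_iff_ball.1 this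
    have hall : ∀ x ∈ X, ℓ x < c * r^2 → ∀ i ≤ p, ‖h^[i] x‖ < ρ := by
      intro x hx hlt i hi
      exact hrb x (mem_ball_zero_iff.2 (hsmall r hr x hx hlt)) i (Finset.mem_range.2 (by omega))
    exact ⟨c * r^2, by positivity, fun x hx hlt => hall x hx hlt 0 (Nat.zero_le _), hall⟩
  obtain ⟨q, hqX, hqδ⟩ : ∃ q ∈ X, ℓ q < δ / p := by
    have h1 : ∀ᶠ x in nhds (0 : Fin (m+1) → ℝ), ℓ x < δ / p := by
      apply ℓ.continuous.continuousAt.eventually_lt continuousAt_const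
      rw [map_zero]; positivity
    by_contra hh
    apply hcon
    filter_upwards [h1, hV.mem_nhds h0V] with x hx hxV
    by_contra hne
    exact hh ⟨x, ⟨hxV, hne⟩, hx⟩
  set B : Set (Fin (m+1) → ℝ) := closedBall 0 ρ with hB
  have hBc : IsCompact B := isCompact_closedBall _ _
  -- the averaged map
  set f : (Fin (m+1) → ℝ) → (Fin (m+1) → ℝ) := fun x => (1/p : ℝ) • ∑ i ∈ Finset.range p, h^[i] x with hf
  have hfc : ContinuousOn f V := (continuousOn_finset_sum _ fun i _ => hci i).const_smul (1/p : ℝ)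
  have hfh : ∀ x ∈ V, f (h x) = f x := by
    intro x hx
    simp only [hf, ← iterate_succ_apply]
    congr 1
    have e1 := Finset.sum_range_succ (fun i => h^[i] x) p
    have e2 := Finset.sum_range_succ' (fun i => h^[i] x) p
    rw [e1] at e2
    rw [hper x hx] at e2
    simpa using e2.symm
  have hffix : ∀ x ∈ V, x ∉ X → f x = x := by
    intro x hx hxX
    simp only [hf, hfixi x hx hxX]
    rw [Finset.sum_const, Finset.card_range, ← Nat.cast_smul_eq_nsmul ℝ, smul_smul]
    field_simp
    simp
  have hfℓ : ∀ x ∈ X, ℓ x ≤ p * ℓ (f x) := by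
    intro x hx
    simp only [hf, map_smul, map_sum, smul_eq_mul]
    rw [← mul_assoc, mul_one_div_cancel hp0.ne', one_mul]
    have := Finset.single_le_sum (f := fun i => ℓ (h^[i] x)) (fun i _ => hℓ0 _ (hXmi i hx)) (Finset.mem_range.2 hp.pos)
    exact this
  obtain ⟨ε, hε, hεX, hεδ⟩ : ∃ ε > 0, closedBall q ε ⊆ X ∧ ∀ v, ‖v‖ ≤ ε → ℓ q + |ℓ v| < δ / p := by
    obtain ⟨ε1, hε1, h1⟩ := Metric.nhds_basis_closedBall.mem_iff.1 (hXo.mem_nhds hqX)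
    have h2 : ∀ᶠ v in nhds (0 : Fin (m+1) → ℝ), ℓ q + |ℓ v| < δ / p := by
      apply ContinuousAt.eventually_lt (f := fun v => ℓ q + |ℓ v|) (by fun_prop) continuousAt_const
      simpa using hqδ
    obtain ⟨ε2, hε2, h3⟩ := Metric.nhds_basis_closedBall.mem_iff.1 h2
    refine ⟨min ε1 ε2, lt_min hε1 hε2, (closedBall_subset_closedBall (min_le_left _ _)).trans h1, ?_⟩
    intro v hv
    exact h3 (mem_closedBall_zero_iff.2 (hv.trans (min_le_right _ _)))
  have hKX : ∀ x ∈ V, ‖f x - q‖ ≤ ε → x ∈ X ∧ ℓ x < δ := by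
    intro x hx hle
    have hxX : x ∈ X := by
      by_contra hxX
      rw [hffix x hx hxX] at hle
      exact hxX (hεX (mem_closedBall_iff_norm.2 hle))
    refine ⟨hxX, ?_⟩
    have h1 := hεδ _ hle
    have h2 := hfℓ x hxX
    have h3 : ℓ (f x) < δ / p := by
      have := le_abs_self (ℓ (f x - q))
      rw [map_sub] at this h1
      linarith
    calc ℓ x ≤ p * ℓ (f x) := h2
      _ < p * (δ / p) := by gcongr
      _ = δ := by field_simp
  set K : Set (Fin (m+1) → ℝ) := {x ∈ V | ‖f x - q‖ ≤ ε} with hK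
  have hKXs : K ⊆ X := fun x hx => (hKX x hx.1 hx.2).1
  have hKδ : ∀ x ∈ K, ℓ x < δ := fun x hx => (hKX x hx.1 hx.2).2
  have hKB : ∀ x ∈ K, ‖x‖ < ρ := fun x hx => hδρ x (hKXs hx) (hKδ x hx)
  have hKc : IsCompact K := by
    have e : K = B ∩ (fun x => ‖f x - q‖) ⁻¹' Set.Iic ε := by
      ext x
      constructor
      · intro hx
        exact ⟨mem_closedBall_zero_iff.2 (hKB x hx).le, hx.2⟩
      · rintro ⟨hx, hx'⟩
        exact ⟨hρV hx, hx'⟩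
    rw [e]
    exact hBc.of_isClosed_subset
      (((hfc.mono hρV).sub continuousOn_const).norm.preimage_isClosed_of_isClosed hBc.isClosed isClosed_Iic)
      Set.inter_subset_left
  -- pass to the subtype of non-fixed points
  have hloc : LocallyCompactSpace X := hXo.locallyCompactSpace
  set hs : X → X := hXm.restrict h X X with hhs
  have hsi : ∀ i (x : X), ((hs^[i] x : X) : Fin (m+1) → ℝ) = h^[i] x := by
    intro i x
    induction i with
    | zero => rfl
    | succ k ih => rw [iterate_succ_apply', iterate_succ_apply', ← ih]; rfl
  have HF : FreeCyc hs p := by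
    refine ⟨(hc.mono hXV).mapsToRestrict hXm, hp.pos, ?_, ?_⟩
    · intro x
      apply Subtype.ext
      rw [hsi]; exact hper x (hXV x.2)
    · intro x i h0 hi he
      have := congrArg Subtype.val he
      rw [hsi] at this
      exact x.2.2 (per_coprime h x p i hp (hper x (hXV x.2)) h0 hi this)
  have hKs : IsCompact (Subtype.val ⁻¹' K : Set X) := by
    rw [Subtype.isCompact_iff, Subtype.image_preimage_coe, Set.inter_eq_right.2 hKXs]
    exact hKc
  obtain ⟨θa, hθac, hθah, hθan, ⟨S, hS, hS0⟩, L0, hL0c, hL0cov, hL0z, hL0f⟩ := perturb HF (approx_sub X)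
    (fun x => f x - q) ((continuousOn_iff_continuous_domRestrict.1 (hfc.mono hXV)).sub continuous_const)
    (fun x => by
      show f (h x) - q = _
      rw [hfh x (hXV x.2)])
    (Subtype.val ⁻¹' K) hKs (by
      rintro x ⟨hx1, hx2⟩
      refine ⟨hm hx1, ?_⟩
      show ‖f (h x) - q‖ ≤ ε
      rw [hfh x hx1]; exact hx2) ε hε
  obtain ⟨O0, hO0, hLO0, hO0f⟩ := sep_open HF L0 hL0c hL0f
  obtain ⟨θ, hθc, hθX, hθa⟩ := ext_zero hXo θa hθac S hS hS0
  have hθn : ∀ x, ‖θ x‖ ≤ ε := by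
    intro x
    by_cases hx : x ∈ X
    · rw [hθX ⟨x, hx⟩]; exact hθan _
    · rw [hθa x hx, norm_zero]; exact hε.le
  have hθh : ∀ x ∈ V, θ (h x) = θ x := by
    intro x hx
    by_cases hxX : x ∈ X
    · have := hθah ⟨x, hxX⟩
      rw [← hθX, ← hθX] at this
      exact this
    · rw [hfix x hx hxX]
  set L : Set (Fin (m+1) → ℝ) := Subtype.val '' L0 with hL
  have hLc : IsCompact L := hL0c.image continuous_subtype_val
  set O : Set (Fin (m+1) → ℝ) := Subtype.val '' O0 with hO
  have hOo : IsOpen O := hXo.isOpenMap_subtype_val _ hO0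
  have hLO : L ⊆ O := Set.image_mono hLO0
  have hOX : O ⊆ X := by rintro _ ⟨x, _, rfl⟩; exact x.2
  have hOf : ∀ z ∈ O, ∀ i, 0 < i → i < p → h^[i] z ∉ O := by
    rintro _ ⟨z, hz, rfl⟩ i h0 hi ⟨w, hw, hwz⟩
    rw [← hsi] at hwz
    rw [Subtype.ext hwz] at hw
    exact hO0f z hz i h0 hi hw
  set f' : (Fin (m+1) → ℝ) → (Fin (m+1) → ℝ) := fun x => f x + θ x with hf'
  have hf'c : ContinuousOn f' V := hfc.add hθc.continuousOn
  have hf'h : ∀ x ∈ V, f' (h x) = f' x := fun x hx => by simp only [hf', hfh x hx, hθh x hx]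
  have hf'hi : ∀ i, ∀ x ∈ V, f' (h^[i] x) = f' x := by
    intro i x hx
    induction i with
    | zero => rfl
    | succ k ih => rw [iterate_succ_apply', hf'h _ (hmi k hx), ih]
  have hzK : ∀ x ∈ V, f' x = q → x ∈ K := by
    intro x hx he
    refine ⟨hx, ?_⟩
    have : f x - q = - θ x := by
      rw [← he]; simp [hf']
    rw [this, norm_neg]; exact hθn x
  have hzL : ∀ x ∈ V, f' x = q → ∃ i < p, h^[i] x ∈ L := by
    intro x hx he
    have hxK := hzK x hx he
    obtain ⟨i, hi, hiL⟩ := hL0cov ⟨x, hKXs hxK⟩ hxK (by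
      rw [← hθX]
      rw [← he]; simp [hf'])
    refine ⟨i, hi, ?_⟩
    exact ⟨_, hiL, hsi _ _⟩
  have hLK : L ⊆ K := by
    rintro _ ⟨x, hx, rfl⟩
    exact (hL0z x hx).1
  -- compact neighbourhood of L
  obtain ⟨A, hAc, hLA, hAO⟩ := exists_compact_between hLc 
    (hOo.inter (isOpen_ball.inter (isOpen_lt ℓ.continuous continuous_const)))
    (show L ⊆ O ∩ (ball 0 ρ ∩ {x | ℓ x < δ}) from fun x hx => 
      ⟨hLO hx, mem_ball_zero_iff.2 (hKB x (hLK hx)), hKδ x (hLK hx)⟩)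
  -- first homotopy
  have step1 : ∀ᶠ N : ℕ in Filter.atTop, cnt N B (fun x => f' x - q) = 1 := by
    have hh := homotopy (A := Set.Icc (0:ℝ) 1 ×ˢ B) (isCompact_Icc.prod hBc)
      (fun y => (1 - y.1) • y.2 + y.1 • f' y.2 - q) (by
        have : ContinuousOn (fun y : ℝ × (Fin (m+1) → ℝ) => f' y.2) (Set.Icc (0:ℝ) 1 ×ˢ B) :=
          hf'c.comp continuousOn_snd (fun y hy => hρV hy.2)
        exact (ContinuousOn.add (by fun_prop) (continuousOn_fst.smul this)).sub continuousOn_const)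
      (Set.univ ×ˢ ball 0 ρ) (isOpen_univ.prod isOpen_ball) (by
        rintro ⟨t, x⟩ ⟨⟨ht0, ht1⟩, hxB⟩ he
        refine ⟨trivial, mem_ball_zero_iff.2 ?_⟩
        simp only at he ht0 ht1 hxB ⊢
        have hxV := hρV hxB
        have hxX : x ∈ X := by
          by_contra hxX
          have : f' x = x := by simp only [hf', hffix x hxV hxX, hθa x hxX, add_zero]
          rw [this, ← add_smul, sub_add_cancel, one_smul, sub_eq_zero] at he
          exact hxX (he ▸ hqX)
        apply hδρ x hxX
        have h1 := congrArg ℓ (sub_eq_zero.1 he)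
        simp only [hf', map_add, map_smul, smul_eq_mul] at h1
        have h2 := hfℓ x hxX
        have h3 := hεδ _ (hθn x)
        have h4 := neg_abs_le (ℓ (θ x))
        have h5 := hℓ0 x hxX
        have h6 : (1:ℝ) ≤ p := by exact_mod_cast hp.pos
        have h7 : p * (ℓ q + |ℓ (θ x)|) < δ := by
          rw [lt_div_iff₀ hp0] at h3; linarith
        nlinarith [mul_nonneg ht0 (abs_nonneg (ℓ (θ x))), mul_nonneg (sub_nonneg.2 ht1) h5, mul_nonneg ht0 (sub_nonneg.2 h2),
          mul_nonneg (sub_nonneg.2 h6) (mul_nonneg (sub_nonneg.2 ht1) h5), mul_nonneg hp0.le (mul_nonneg ht0 (show 0 ≤ ℓ (θ x) + |ℓ (θ x)| by linarith)),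
          mul_nonneg hp0.le (mul_nonneg (sub_nonneg.2 ht1) (abs_nonneg (ℓ (θ x))))])
      (by
        rintro ⟨t, x⟩ ⟨_, hx⟩ ht
        exact ⟨ht, ball_subset_closedBall hx⟩)
    have hid := cnt_id (A := B) q (mem_nhds_iff.2 ⟨ball 0 ρ, ball_subset_closedBall, isOpen_ball,
      mem_ball_zero_iff.2 (hδρ q hqX (hqδ.trans_le (div_le_self hδ.le (by exact_mod_cast hp.pos))))⟩)
    filter_upwards [hh, hid] with N h1 h2
    simpa [← h2] using h1.symm
  have hAX : A ⊆ X := fun x hx => hOX (hAO hx).1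
  -- second step: additivity
  have hBi : ∀ i, ContinuousOn (h^[i]) B := fun i => (hci i).mono hρV
  have step2 : ∀ᶠ N : ℕ in Filter.atTop, cnt N B (fun x => f' x - q) = 
      ∑ i ∈ Finset.range p, cnt N {x ∈ B | h^[i] x ∈ A} (fun x => f' x - q) := by
    apply cnt_additive hBc _ ((hf'c.mono hρV).sub continuousOn_const) p (fun i => {x ∈ B | h^[i] x ∈ A})
      (fun i => ball 0 ρ ∩ h^[i] ⁻¹' (interior A))
    · intro i
      exact ((hBi i).mono ball_subset_closedBall).isOpen_inter_preimage isOpen_ball isOpen_interior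
    · rintro i x ⟨h1, h2⟩
      exact ⟨ball_subset_closedBall h1, interior_subset h2⟩
    · rintro i _ x ⟨h1, _⟩; exact h1
    · have key : ∀ i < p, ∀ j < p, i < j → Disjoint {x ∈ B | h^[i] x ∈ A} {x ∈ B | h^[j] x ∈ A} := by
        intro i hi j hj hij
        rw [Set.disjoint_left]
        rintro x ⟨_, hx⟩ ⟨_, hx'⟩
        apply hOf _ (hAO hx).1 (j - i) (by omega) (by omega)
        rw [← iterate_add_apply, Nat.sub_add_cancel hij.le]
        exact (hAO hx').1
      intro i hi j hj hij
      rcases lt_or_gt_of_ne hij with h | h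
      · exact key i hi j hj h
      · exact (key j hj i hi h).symm
    · intro x hx he
      obtain ⟨i, hi, hiL⟩ := hzL x (hρV hx) (sub_eq_zero.1 he)
      exact ⟨i, hi, mem_ball_zero_iff.2 (hKB x (hzK x (hρV hx) (sub_eq_zero.1 he))), hLA hiL⟩
  -- third step: all summands agree
  have step3 : ∀ i ∈ Finset.range p, ∀ᶠ N : ℕ in Filter.atTop, 
      cnt N {x ∈ B | h^[i] x ∈ A} (fun x => f' x - q) = cnt N A (fun x => f' x - q) := by
    intro i hi
    rw [Finset.mem_range] at hi
    set ht : ℝ × (Fin (m+1) → ℝ) → (Fin (m+1) → ℝ) := fun y => (1 - y.1) • y.2 + y.1 • h^[i] y.2 with hht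
    have htc : ContinuousOn ht (Set.univ ×ˢ B) := by
      have : ContinuousOn (fun y : ℝ × (Fin (m+1) → ℝ) => h^[i] y.2) (Set.univ ×ˢ B) :=
        (hBi i).comp continuousOn_snd (fun y hy => hy.2)
      exact (ContinuousOn.add (by fun_prop) (continuousOn_fst.smul this))
    set 𝒜 : Set (ℝ × (Fin (m+1) → ℝ)) := (Set.Icc (0:ℝ) 1 ×ˢ B) ∩ ht ⁻¹' A with h𝒜
    have h𝒜c : IsCompact 𝒜 := (isCompact_Icc.prod hBc).of_isClosed_subset
      ((htc.mono (Set.prod_mono (Set.subset_univ _) subset_rfl)).preimage_isClosed_of_isClosed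
        (isCompact_Icc.prod hBc).isClosed hAc.isClosed) Set.inter_subset_left
    have hh := homotopy h𝒜c (fun y => f' (ht y) - q) (by
        apply ContinuousOn.sub _ continuousOn_const
        apply hf'c.comp (htc.mono _)
        · intro y hy
          exact hXV (hAX hy.2)
        · intro y hy
          exact ⟨trivial, hy.1.2⟩)
      ((Set.univ ×ˢ ball 0 ρ) ∩ ht ⁻¹' (interior A))
      ((htc.mono (Set.prod_mono subset_rfl ball_subset_closedBall)).isOpen_inter_preimage
        (isOpen_univ.prod isOpen_ball) isOpen_interior)
      (by
        rintro ⟨t, x⟩ ⟨⟨⟨ht0, ht1⟩, hxB⟩, hyA⟩ he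
        simp only at ht0 ht1 hxB
        have hyA' : ht (t, x) ∈ A := hyA
        have hyV := hXV (hAX hyA')
        have hxV := hρV hxB
        obtain ⟨k, hk, hkL⟩ := hzL _ hyV (sub_eq_zero.1 he)
        have hk0 : k = 0 := by
          by_contra hk0
          exact hOf _ (hAO hyA').1 k (Nat.pos_of_ne_zero hk0) hk (hLO hkL)
        subst hk0
        refine ⟨⟨trivial, mem_ball_zero_iff.2 ?_⟩, hLA hkL⟩
        show ‖x‖ < ρ
        have hxX : x ∈ X := by
          by_contra hxX
          apply hxX
          have : ht (t, x) = x := by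
            simp only [hht, hfixi x hxV hxX, ← add_smul, sub_add_cancel, one_smul]
          rw [this] at hyA'
          exact hAX hyA'
        have hlt : ℓ (ht (t, x)) < δ := (hAO hyA').2.2
        simp only [hht, map_add, map_smul, smul_eq_mul] at hlt
        by_cases hx1 : ℓ x < δ
        · exact hδρ x hxX hx1
        · have hx2 : ℓ (h^[i] x) < δ := by
            by_contra hx2
            push Not at hx1 hx2
            nlinarith [mul_nonneg ht0 (sub_nonneg.2 hx2), mul_nonneg (sub_nonneg.2 ht1) (sub_nonneg.2 hx1)]
          have := hδi _ (hXmi i hxX) hx2 (p - i) (by omega)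
          rwa [hback x hxV i hi.le] at this)
      (by
        rintro ⟨t, x⟩ ⟨⟨_, hx⟩, hA⟩ ht
        exact ⟨⟨ht, ball_subset_closedBall hx⟩, Set.preimage_mono interior_subset hA⟩)
    filter_upwards [hh] with N hN
    have e0 : {x | ((0:ℝ), x) ∈ 𝒜} = A := by
      ext x
      simp only [h𝒜, hht, Set.mem_setOf_eq, Set.mem_inter_iff, Set.mem_prod, Set.mem_preimage, sub_zero, one_smul, zero_smul, add_zero]
      constructor
      · exact fun h => h.2
      · exact fun h => ⟨⟨by simp, ball_subset_closedBall (hAO h).2.1⟩, h⟩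
    have e1 : {x | ((1:ℝ), x) ∈ 𝒜} = {x ∈ B | h^[i] x ∈ A} := by
      ext x
      simp [h𝒜, hht]
    rw [e0, e1] at hN
    rw [cnt_congr N _ (fun x => f' x - q) (fun x => f' (ht (1, x)) - q), ← hN]
    · apply cnt_congr
      intro x _
      simp [hht]
    · rintro x ⟨hx, _⟩
      simp [hht, hf'hi i x (hρV hx)]
  have step4 : ∀ᶠ N : ℕ in Filter.atTop, ∀ i ∈ Finset.range p, 
      cnt N {x ∈ B | h^[i] x ∈ A} (fun x => f' x - q) = cnt N A (fun x => f' x - q) := by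
    rw [Filter.eventually_all_finset]; exact step3
  obtain ⟨N, ⟨h1, h2⟩, h3⟩ := ((step1.and step2).and step4).exists
  rw [h1, Finset.sum_congr rfl h3, Finset.sum_const, Finset.card_range, nsmul_eq_mul] at h2
  have hdvd : (p:ℤ) ∣ 1 := ⟨_, h2⟩
  have := Int.natCast_dvd_natCast.1 (by simpa using hdvd : (p:ℤ) ∣ ((1:ℕ):ℤ))
  exact hp.one_lt.ne' (Nat.dvd_one.1 this)

end Newman
end

section
set_option autoImplicit false
namespace Newman
open Metric Function

lemma core_conj {m : ℕ} {E : Type*} [TopologicalSpace E] {V : Set E} (hV : IsOpen V) (h : E → E)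
    (hm : Set.MapsTo h V V) (hc : ContinuousOn h V) (p : ℕ) (hp : p.Prime) (hper : ∀ x ∈ V, h^[p] x = x)
    (z : E) (hz : z ∈ V) (hhz : h z = z) (φ : E → (Fin (m+1) → ℝ)) (ψ : (Fin (m+1) → ℝ) → E)
    (V' : Set (Fin (m+1) → ℝ)) (hV' : IsOpen V') (hφ : ContinuousOn φ V) (hψ : ContinuousOn ψ V')
    (hφm : Set.MapsTo φ V V') (hψm : Set.MapsTo ψ V' V) (hφψ : ∀ x ∈ V', φ (ψ x) = x) (hψφ : ∀ x ∈ V, ψ (φ x) = x)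
    (hφz : φ z = 0)
    (ℓ : (Fin (m+1) → ℝ) →L[ℝ] ℝ) (c : ℝ) (hc0 : 0 < c)
    (hℓ : ∀ x ∈ V, h x ≠ x → c * ‖φ x‖^2 ≤ ℓ (φ x)) : ∀ᶠ x in nhds z, h x = x := by
  have hψ0 : ψ 0 = z := by rw [← hφz, hψφ z hz]
  have hit : ∀ i, ∀ x ∈ V', (fun w => φ (h (ψ w)))^[i] x = φ (h^[i] (ψ x)) := by
    intro i x hx
    induction i with
    | zero => exact (hφψ x hx).symm
    | succ k ih => 
      rw [iterate_succ_apply', ih, iterate_succ_apply', hψφ _ (hm.iterate k (hψm hx))]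
  have := core hV' (fun w => φ (h (ψ w))) (fun w hw => hφm (hm (hψm hw)))
    (hφ.comp (hc.comp hψ hψm) (fun w hw => hm (hψm hw))) p hp
    (fun w hw => by rw [hit p w hw, hper _ (hψm hw), hφψ w hw])
    (hφz ▸ hφm hz) (by simp only [hψ0, hhz, hφz]) ℓ c hc0
    (fun w hw hne => by
      have := hℓ (ψ w) (hψm hw) (fun he => hne (by simp only [he, hφψ w hw]))
      rwa [hφψ w hw] at this)
  rw [← hφz] at this
  have h2 := (hφ.continuousAt (hV.mem_nhds hz)).eventually this
  filter_upwards [h2, hV.mem_nhds hz] with x hx hxV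
  rw [hψφ x hxV] at hx
  have := congrArg ψ hx
  rwa [hψφ x hxV, hψφ _ (hm hxV)] at this

lemma newman_prime {n : ℕ} {V : Set (EuclideanSpace ℝ (Fin n))} (hV : IsOpen V) (h : EuclideanSpace ℝ (Fin n) → EuclideanSpace ℝ (Fin n))
    (hm : Set.MapsTo h V V) (hc : ContinuousOn h V) (p : ℕ) (hp : p.Prime) (hper : ∀ x ∈ V, h^[p] x = x)
    (z0 : EuclideanSpace ℝ (Fin n)) (hz0 : z0 ∈ V) (hfr : ∃ᶠ y in nhds z0, ∀ᶠ x in nhds y, h x = x) :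
    ∀ᶠ x in nhds z0, h x = x := by
  cases n with
  | zero => exact Filter.Eventually.of_forall fun x => Subsingleton.elim _ _
  | succ m => 
  by_contra hcon
  set F : Set (EuclideanSpace ℝ (Fin (m+1))) := {y | ∀ᶠ x in nhds y, h x = x} with hF
  have hFo : IsOpen F := isOpen_setOf_eventually_nhds
  have hFh : ∀ x ∈ F, h x = x := fun x hx => Filter.Eventually.self_of_nhds (p := fun x => h x = x) hx
  obtain ⟨R, hR, hRV⟩ := Metric.mem_nhds_iff.1 (hV.mem_nhds hz0)
  obtain ⟨y, hyF, hyz⟩ := (hfr.and_eventually (ball_mem_nhds z0 (half_pos hR))).exists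
  have hyF : y ∈ F := hyF
  obtain ⟨z, hz, hzr⟩ := hFo.isClosed_compl.exists_infDist_eq_dist (⟨z0, hcon⟩ : Fᶜ.Nonempty) y
  set r := dist y z with hr
  have hr0 : 0 < r := dist_pos.2 (fun h => hz (h ▸ hyF))
  have hrR : r ≤ dist y z0 := hzr ▸ infDist_le_dist_of_mem hcon
  have hzV : z ∈ V := by
    apply hRV
    rw [mem_ball]
    calc dist z z0 ≤ dist z y + dist y z0 := dist_triangle _ _ _
      _ < R := by rw [dist_comm z y]; linarith
  have hbF : ball y r ⊆ F := by
    intro x hx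
    by_contra hxF
    have := infDist_le_dist_of_mem (x := y) (show x ∈ Fᶜ from hxF)
    rw [mem_ball, dist_comm] at hx
    linarith
  have hhz : h z = z := by
    have hzcl : z ∈ closure F := closure_mono hbF (by
      rw [closure_ball _ hr0.ne', mem_closedBall, dist_comm])
    by_contra hne
    have h1 : ∀ᶠ x in nhds z, h x ≠ x := 
      (ContinuousAt.ne_iff_eventually_ne (hc.continuousAt (hV.mem_nhds (by assumption))) continuousAt_id).1 hne
    obtain ⟨x, hx, hxF⟩ := ((mem_closure_iff_frequently.1 hzcl).and_eventually h1).exists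
    exact hxF (hFh x hx)
  have hyz' : y ≠ z := dist_pos.1 hr0
  have hout : ∀ x, h x ≠ x → r ≤ dist x y := by
    intro x hx
    by_contra hlt
    exact hx (hFh x (hbF (by rw [mem_ball]; linarith)))
  have hyV : y ∈ V := hRV (by rw [mem_ball]; linarith)
  set I := EuclideanGeometry.inversion y r with hI
  have hII : ∀ x, I (I x) = x := EuclideanGeometry.inversion_inversion y hr0.ne'
  have hIy : ∀ x, I x = y ↔ x = y := fun x => EuclideanGeometry.inversion_eq_center hr0.ne'
  have hIc : ContinuousOn I {y}ᶜ := continuousOn_const.inversion continuousOn_const continuousOn_id (fun a ha => ha)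
  have hIz : I z = z := EuclideanGeometry.inversion_of_mem_sphere (by rw [mem_sphere, dist_comm])
  let e := EuclideanSpace.equiv (Fin (m+1)) ℝ
  have hinj : ∀ x ∈ V, h x = y → x = y := by
    intro x hx he
    have h1 : h^[p-1] (h x) = x := by
      rw [← iterate_succ_apply, Nat.succ_eq_add_one, Nat.sub_add_cancel hp.pos, hper x hx]
    rw [he, iterate_fixed (hFh y hyF)] at h1
    exact h1.symm
  have key := core_conj (V := V \ {y}) (hV.sdiff isClosed_singleton) h
    (fun x hx => ⟨hm hx.1, fun he => hx.2 (hinj x hx.1 he)⟩) (hc.mono Set.diff_subset) p hp (fun x hx => hper x hx.1)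
    z ⟨hzV, fun he => hyz' he.symm⟩ hhz (fun x => e (I x - z)) (fun w => I (z + e.symm w))
    ({w | z + e.symm w ≠ y} ∩ (fun w => I (z + e.symm w)) ⁻¹' V)
    (ContinuousOn.isOpen_inter_preimage (hIc.comp (by fun_prop) (fun w hw => hw)) 
      (isOpen_ne_fun (by fun_prop) continuous_const) hV)
    (e.continuous.comp_continuousOn ((hIc.mono (fun x hx => hx.2)).sub continuousOn_const))
    (hIc.comp (by fun_prop) (fun w hw => hw.1))
    (fun x hx => by
      simp only [Set.mem_inter_iff, Set.mem_setOf_eq, Set.mem_preimage, ContinuousLinearEquiv.symm_apply_apply, add_sub_cancel, hII]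
      exact ⟨fun he => hx.2 ((hIy x).1 he), hx.1⟩)
    (fun w hw => ⟨hw.2, fun he => hw.1 ((hIy _).1 he)⟩)
    (fun w hw => by simp [hII])
    (fun x hx => by simp [hII])
    (by simp [hIz])
    (((-2 : ℝ) • innerSL ℝ (z - y)).comp (e.symm : (Fin (m+1) → ℝ) →L[ℝ] _)) 1 one_pos
    (fun x hx hne => by
      have h1 := hout x hne
      have h2 : dist (I x) y ≤ r := by
        rw [EuclideanGeometry.dist_inversion_center, div_le_iff₀ (hr0.trans_le h1)]
        nlinarith
      have h3 : ‖e (I x - z)‖ ≤ ‖I x - z‖ := by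
        rw [pi_norm_le_iff_of_nonneg (norm_nonneg _)]
        intro i
        exact PiLp.norm_apply_le (p := 2) (I x - z) i
      have h4 : ‖I x - z‖^2 ≤ -2 * inner ℝ (z - y) (I x - z) := by
        have h5 : ‖(I x - z) + (z - y)‖^2 ≤ r^2 := by
          rw [sub_add_sub_cancel, ← dist_eq_norm]
          gcongr
        rw [norm_add_sq_real, real_inner_comm, ← dist_eq_norm z y, dist_comm z y] at h5
        linarith
      have h6 : ‖e (I x - z)‖^2 ≤ ‖I x - z‖^2 := by gcongr
      have h7 := h6.trans h4
      rw [inner_sub_left] at h7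
      simpa using h7)
  exact hz key

lemma newman_local {n : ℕ} (k : ℕ) : ∀ {V : Set (EuclideanSpace ℝ (Fin n))} (_ : IsOpen V) (h : EuclideanSpace ℝ (Fin n) → EuclideanSpace ℝ (Fin n))
    (_ : Set.MapsTo h V V) (_ : ContinuousOn h V) (_ : 0 < k) (_ : ∀ x ∈ V, h^[k] x = x)
    (z : EuclideanSpace ℝ (Fin n)) (_ : z ∈ V) (_ : ∃ᶠ y in nhds z, ∀ᶠ x in nhds y, h x = x),
    ∀ᶠ x in nhds z, h x = x := by
  induction k using Nat.strong_induction_on with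
  | _ k ih => 
  intro V hV h hm hc hk hper z hz hfr
  by_cases hk1 : k = 1
  · subst hk1
    filter_upwards [hV.mem_nhds hz] with x hx
    exact hper x hx
  obtain ⟨p, hp, k', rfl⟩ := Nat.exists_prime_and_dvd hk1
  have hk' : 0 < k' := Nat.pos_of_mul_pos_left hk
  have hhz : h z = z := by
    by_contra hne
    have h1 : ∀ᶠ x in nhds z, h x ≠ x := 
      (ContinuousAt.ne_iff_eventually_ne (hc.continuousAt (hV.mem_nhds (by assumption))) continuousAt_id).1 hne
    obtain ⟨x, hx, hxF⟩ := (hfr.and_eventually h1).exists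
    exact hxF hx.self_of_nhds
  have h1 := ih k' (by nlinarith [hp.two_le]) hV (h^[p]) (hm.iterate p) (contOn_iter hm hc p) hk'
    (fun x hx => by rw [← iterate_mul]; exact hper x hx) z hz
    (hfr.mono fun y hy => hy.mono fun x hx => iterate_fixed hx p)
  obtain ⟨W, hW, hWo, hzW⟩ := _root_.eventually_nhds_iff.1 (h1.and (hV.mem_nhds hz))
  have hWV : W ⊆ V := fun x hx => (hW x hx).2
  have hci := contOn_iter hm hc
  apply newman_prime (V := ⋂ i ∈ Finset.range p, V ∩ h^[i] ⁻¹' W) _ h _ _ p hp _ z _ hfr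
  · apply isOpen_biInter_finset
    intro i _
    exact (hci i).isOpen_inter_preimage hV hWo
  · intro x hx
    simp only [Set.mem_iInter, Finset.mem_range] at hx ⊢
    intro i hi
    refine ⟨hm (hx i hi).1, ?_⟩
    show h^[i] (h x) ∈ W
    rw [← iterate_succ_apply]
    by_cases hip : i + 1 < p
    · exact (hx _ hip).2
    · have : i.succ = p := by rw [Nat.succ_eq_add_one]; omega
      rw [this]
      have hxW : x ∈ W := (hx 0 hp.pos).2
      rw [(hW x hxW).1]; exact hxW
  · apply hc.mono
    intro x hx
    simp only [Set.mem_iInter, Finset.mem_range] at hx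
    exact (hx 0 hp.pos).1
  · intro x hx
    simp only [Set.mem_iInter, Finset.mem_range] at hx
    exact (hW x (hx 0 hp.pos).2).1
  · simp only [Set.mem_iInter, Finset.mem_range]
    intro i hi
    refine ⟨hz, ?_⟩
    show h^[i] z ∈ W
    rw [iterate_fixed hhz]; exact hzW

end Newman
end

section
set_option autoImplicit false
namespace Newman
open Metric Function

/-- The local Newman property of a space. -/
def NewmanProp (M : Type*) [TopologicalSpace M] : Prop :=
  ∀ (N : Set M) (h : M → M) (k : ℕ) (z : M), IsOpen N → Set.MapsTo h N N → ContinuousOn h N → 0 < k →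
    (∀ x ∈ N, h^[k] x = x) → z ∈ N → (∃ᶠ y in nhds z, ∀ᶠ x in nhds y, h x = x) → ∀ᶠ x in nhds z, h x = x

lemma fixed_of_freq {M : Type*} [TopologicalSpace M] [T2Space M] (h : M → M) (z : M) (hc : ContinuousAt h z)
    (hfr : ∃ᶠ y in nhds z, ∀ᶠ x in nhds y, h x = x) : h z = z := by
  by_contra hne
  have h1 : ∀ᶠ x in nhds z, h x ≠ x := (ContinuousAt.ne_iff_eventually_ne hc continuousAt_id).1 hne
  obtain ⟨x, hx, hxF⟩ := (hfr.and_eventually h1).exists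
  exact hxF hx.self_of_nhds

/-- An invariant open neighbourhood of a fixed point inside a given set on which `h` is `k`-periodic. -/
lemma inv_nbhd {M : Type*} [TopologicalSpace M] {N : Set M} (hN : IsOpen N) (h : M → M) (hm : Set.MapsTo h N N)
    (hc : ContinuousOn h N) (k : ℕ) (hk : 0 < k) (z : M) (hz : z ∈ N) (hhz : h z = z) (S : Set M) (hS : IsOpen S) (hzS : z ∈ S)
    (hper : ∀ x ∈ N, x ∈ S → h^[k] x = x) :
    ∃ W, IsOpen W ∧ z ∈ W ∧ W ⊆ N ∧ W ⊆ S ∧ Set.MapsTo h W W := by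
  have hci := contOn_iter hm hc
  refine ⟨⋂ i ∈ Finset.range k, N ∩ h^[i] ⁻¹' S, ?_, ?_, ?_, ?_, ?_⟩
  · apply isOpen_biInter_finset
    intro i _
    exact (hci i).isOpen_inter_preimage hN hS
  · simp only [Set.mem_iInter, Finset.mem_range]
    intro i hi
    refine ⟨hz, ?_⟩
    show h^[i] z ∈ S
    rw [iterate_fixed hhz]; exact hzS
  · intro x hx
    simp only [Set.mem_iInter, Finset.mem_range] at hx
    exact (hx 0 hk).1
  · intro x hx
    simp only [Set.mem_iInter, Finset.mem_range] at hx
    exact (hx 0 hk).2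
  · intro x hx
    simp only [Set.mem_iInter, Finset.mem_range] at hx ⊢
    intro i hi
    refine ⟨hm (hx i hi).1, ?_⟩
    show h^[i] (h x) ∈ S
    rw [← iterate_succ_apply]
    by_cases hip : i + 1 < k
    · exact (hx _ hip).2
    · have : i.succ = k := by rw [Nat.succ_eq_add_one]; omega
      rw [this]
      have hxS : x ∈ S := (hx 0 hk).2
      rw [hper x (hx 0 hk).1 hxS]; exact hxS

lemma newman_mfd {n : ℕ} {M : Type*} [TopologicalSpace M] [T2Space M] [ChartedSpace (EuclideanSpace ℝ (Fin n)) M] :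
    NewmanProp M := by
  intro N h k z hN hm hc hk hper hz hfr
  have hhz := fixed_of_freq h z (hc.continuousAt (hN.mem_nhds hz)) hfr
  set φ := chartAt (EuclideanSpace ℝ (Fin n)) z with hφ
  have hzs : z ∈ φ.source := mem_chart_source _ z
  obtain ⟨W, hWo, hzW, hWN, hWS, hWm⟩ := inv_nbhd hN h hm hc k hk z hz hhz φ.source φ.open_source hzs (fun x hx _ => hper x hx)
  set h' : EuclideanSpace ℝ (Fin n) → EuclideanSpace ℝ (Fin n) := fun w => φ (h (φ.symm w)) with hh'
  have hit : ∀ i, ∀ x ∈ W, h'^[i] (φ x) = φ (h^[i] x) := by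
    intro i x hx
    induction i with
    | zero => rfl
    | succ j ih => 
      rw [iterate_succ_apply', ih, iterate_succ_apply']
      simp only [hh']
      rw [φ.left_inv (hWS (hWm.iterate j hx))]
  have hmap : ∀ y ∈ φ.source, Filter.map φ (nhds y) = nhds (φ y) := fun y hy => φ.map_nhds_eq hy
  have key := newman_local k (V := φ '' W) (φ.isOpen_image_of_subset_source hWo hWS) h'
    (by
      rintro _ ⟨x, hx, rfl⟩
      refine ⟨h x, hWm hx, ?_⟩
      simp only [hh', φ.left_inv (hWS hx)])
    (by
      have h1 : ContinuousOn φ.symm (φ '' W) := φ.continuousOn_symm.mono (by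
        rintro _ ⟨x, hx, rfl⟩; exact φ.map_source (hWS hx))
      have h1m : Set.MapsTo φ.symm (φ '' W) W := by
        rintro _ ⟨x, hx, rfl⟩; rw [φ.left_inv (hWS hx)]; exact hx
      exact (φ.continuousOn.mono hWS).comp ((hc.mono hWN).comp h1 h1m) (hWm.comp h1m)) hk
    (by
      rintro _ ⟨x, hx, rfl⟩
      rw [hit k x hx, hper x (hWN hx)]) (φ z) ⟨z, hzW, rfl⟩
    (by
      rw [← hmap z hzs, Filter.frequently_map]
      refine (hfr.and_eventually (φ.open_source.mem_nhds hzs)).mono ?_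
      rintro y ⟨hy, hys⟩
      rw [← hmap y hys, Filter.eventually_map]
      filter_upwards [hy, φ.open_source.mem_nhds hys] with x hx hxs
      simp only [hh', φ.left_inv hxs, hx])
  rw [← hmap z hzs, Filter.eventually_map] at key
  filter_upwards [key, hWo.mem_nhds hzW] with x hx hxW
  simp only [hh', φ.left_inv (hWS hxW)] at hx
  exact φ.injOn (hWS (hWm hxW)) (hWS hxW) hx

lemma newman_conn {M : Type*} [TopologicalSpace M] [T2Space M] (NW : NewmanProp M) (N : Set M) (h : M → M) (k : ℕ)
    (hN : IsOpen N) (hconn : IsPreconnected N) (hm : Set.MapsTo h N N) (hc : ContinuousOn h N) (hk : 0 < k)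
    (hper : ∀ x ∈ N, h^[k] x = x) (y : M) (hy : y ∈ N) (hyF : ∀ᶠ x in nhds y, h x = x) : ∀ x ∈ N, h x = x := by
  have hFo : IsOpen {y | ∀ᶠ x in nhds y, h x = x} := isOpen_setOfPred_eventually_nhds
  have := hconn.subset_of_closure_inter_subset hFo ⟨y, hy, hyF⟩ (by
    rintro z ⟨hz, hzN⟩
    exact NW N h k z hN hm hc hk hper hzN (mem_closure_iff_frequently.1 hz))
  intro x hx
  exact Filter.Eventually.self_of_nhds (p := fun x => h x = x) (this hx)

lemma newman_pt {M : Type*} [TopologicalSpace M] [T2Space M] (NW : NewmanProp M) (h : M → M) (hc : Continuous h) (k : ℕ)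
    (hk : 0 < k) (z : M) (hper : ∀ᶠ x in nhds z, h^[k] x = x) (hfr : ∃ᶠ y in nhds z, ∀ᶠ x in nhds y, h x = x) :
    ∀ᶠ x in nhds z, h x = x := by
  have hhz := fixed_of_freq h z hc.continuousAt hfr
  obtain ⟨S, hS, hSo, hzS⟩ := _root_.eventually_nhds_iff.1 hper
  obtain ⟨W, hWo, hzW, -, hWS, hWm⟩ := inv_nbhd isOpen_univ h (Set.mapsTo_univ _ _) hc.continuousOn k hk z trivial hhz S hSo hzS 
    (fun x _ hx => hS x hx)
  exact NW W h k z hWo hWm hc.continuousOn hk (fun x hx => hS x (hWS hx)) hzW hfr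

end Newman
end

section
set_option autoImplicit false
open Topology
namespace Newman

lemma baire_sub {M ι : Type*} [TopologicalSpace M] [T2Space M] [LocallyCompactSpace M] [Countable ι]
    (S : Set M) (hS : IsLocallyClosed S) (hne : S.Nonempty) (F : ι → Set M) (hF : ∀ i, IsClosed (F i))
    (hU : ∀ x ∈ S, ∃ i, x ∈ F i) : ∃ i, ∃ z ∈ S, ∃ U : Set M, IsOpen U ∧ z ∈ U ∧ ∀ x ∈ S, x ∈ U → x ∈ F i := by
  haveI := hS.locallyCompactSpace
  haveI : Nonempty S := hne.to_subtype
  obtain ⟨i, ⟨z, hz⟩⟩ := nonempty_interior_of_iUnion_of_closed (X := S) (f := fun i => Subtype.val ⁻¹' (F i))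
    (fun i => (hF i).preimage continuous_subtype_val) (by
      ext ⟨x, hx⟩
      obtain ⟨i, hi⟩ := hU x hx
      simp only [Set.mem_iUnion, Set.mem_univ, iff_true]
      exact ⟨i, hi⟩)
  obtain ⟨O, hO, hOo, hzO⟩ := mem_interior.1 hz
  obtain ⟨U, hUo, rfl⟩ := isOpen_induced_iff.1 hOo
  exact ⟨i, z, z.2, U, hUo, hzO, fun x hx hxU => hO (a := ⟨x, hx⟩) hxU⟩

section act
variable {G M : Type*} [Group G] [TopologicalSpace M] [MulAction G M] [ContinuousConstSMul G M]

lemma orbit_sep [T2Space (Quotient (MulAction.orbitRel G M))] (x y : M) (h : y ∉ MulAction.orbit G x) :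
    ∃ U W : Set M, IsOpen U ∧ IsOpen W ∧ x ∈ U ∧ y ∈ W ∧ ∀ g : G, ∀ u ∈ U, g • u ∉ W := by
  have hne : (Quotient.mk (MulAction.orbitRel G M) x) ≠ Quotient.mk (MulAction.orbitRel G M) y := by
    intro he
    have := Quotient.exact he.symm
    exact h this
  obtain ⟨U, W, hU, hW, hxU, hyW, hd⟩ := t2_separation hne
  refine ⟨_, _, hU.preimage continuous_quotient_mk', hW.preimage continuous_quotient_mk', hxU, hyW, ?_⟩
  intro g u hu hgu
  have he : Quotient.mk (MulAction.orbitRel G M) (g • u) = Quotient.mk (MulAction.orbitRel G M) u :=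
    Quotient.sound (MulAction.mem_orbit u g)
  have h1 : Quotient.mk (MulAction.orbitRel G M) (g • u) ∈ W := hgu
  rw [he] at h1
  exact Set.disjoint_left.1 hd hu h1

lemma orbit_closed [T2Space (Quotient (MulAction.orbitRel G M))] (x : M) : IsClosed (MulAction.orbit G x) := by
  rw [← isOpen_compl_iff, isOpen_iff_mem_nhds]
  intro y hy
  obtain ⟨U, W, hU, hW, hxU, hyW, hd⟩ := orbit_sep (G := G) x y hy
  filter_upwards [hW.mem_nhds hyW] with w hw
  rintro ⟨g, rfl⟩
  exact hd g x hxU hw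

lemma orbit_isolated [Countable G] [T2Space M] [LocallyCompactSpace M] [T2Space (Quotient (MulAction.orbitRel G M))] (x : M) :
    ∃ U : Set M, IsOpen U ∧ x ∈ U ∧ ∀ g : G, g • x ∈ U → g • x = x := by
  obtain ⟨g, z, hz, U, hU, hzU, h⟩ := baire_sub (MulAction.orbit G x) (orbit_closed x).isLocallyClosed
    ⟨x, MulAction.mem_orbit_self x⟩ (fun g : G => {g • x}) (fun _ => isClosed_singleton) (by
      rintro _ ⟨g, rfl⟩; exact ⟨g, rfl⟩)
  have hzg : z = g • x := h z hz hzU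
  refine ⟨(fun y => g • y) ⁻¹' U, hU.preimage (continuous_const_smul g), ?_, ?_⟩
  · subst hzg; exact hzU
  · intro k hk
    have h1 := h (g • k • x) (by rw [smul_smul]; exact MulAction.mem_orbit _ _) hk
    exact smul_left_cancel g h1

lemma orbit_compact_finite [Countable G] [T2Space M] [LocallyCompactSpace M] [T2Space (Quotient (MulAction.orbitRel G M))] (x : M) 
    (C : Set M) (hC : IsCompact C) : (MulAction.orbit G x ∩ C).Finite := by
  have h : ∀ y : M, ∃ U ∈ 𝓝 y, (MulAction.orbit G x ∩ U) ⊆ {y} := by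
    intro y
    by_cases hy : y ∈ MulAction.orbit G x
    · obtain ⟨U, hU, hyU, h⟩ := orbit_isolated (G := G) y
      refine ⟨U, hU.mem_nhds hyU, ?_⟩
      rintro w ⟨hw, hwU⟩
      rw [← MulAction.orbit_eq_iff.2 hy] at hw
      obtain ⟨g, rfl⟩ := hw
      exact h g hwU
    · refine ⟨_, (orbit_closed (G := G) x).isOpen_compl.mem_nhds hy, ?_⟩
      rintro w ⟨hw, hw'⟩
      exact absurd hw hw'
  choose U hU hs using h
  obtain ⟨t, -, ht⟩ := hC.elim_nhds_subcover U (fun y _ => hU y)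
  refine t.finite_toSet.subset ?_
  rintro w ⟨hw, hwC⟩
  obtain ⟨y, hy, hwy⟩ := Set.mem_iUnion₂.1 (ht hwC)
  have : w = y := hs y ⟨hw, hwy⟩
  rw [this]; exact hy

lemma good_nbhd [Countable G] [T2Space M] [LocallyCompactSpace M] [LocallyConnectedSpace M] 
    [T2Space (Quotient (MulAction.orbitRel G M))] (x : M) (W : Set M) (hW : W ∈ 𝓝 x) :
    ∃ V C : Set M, IsOpen V ∧ IsPreconnected V ∧ x ∈ V ∧ IsCompact C ∧ V ⊆ C ∧ C ⊆ W ∧ 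
      (∀ g : G, ∀ y ∈ V, g • y ∈ V → g • x = x) ∧ (∀ g : G, g • x = x → ∀ y ∈ V, g • y ∈ V) := by
  obtain ⟨I, hI, hxI, hiso⟩ := orbit_isolated (G := G) x
  obtain ⟨K, hK, hKW, hKc⟩ := local_compact_nhds (Filter.inter_mem hW (hI.mem_nhds hxI))
  have hKint : x ∈ interior K := mem_interior_iff_mem_nhds.2 hK
  have hD : IsCompact (K \ interior K) := hKc.diff isOpen_interior
  have h : ∀ d : M, ∃ A B : Set M, IsOpen A ∧ x ∈ A ∧ B ∈ 𝓝 d ∧ (d ∈ K \ interior K → ∀ g : G, ∀ a ∈ A, g • a ∉ B) := by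
    intro d
    by_cases hd : d ∈ K \ interior K
    · obtain ⟨A, B, hA, hB, hxA, hdB, h⟩ := orbit_sep (G := G) x d (by
        rintro ⟨g, rfl⟩
        have : g • x = x := hiso g (hKW hd.1).2
        apply hd.2
        simp only [this]
        exact hKint)
      exact ⟨A, B, hA, hxA, hB.mem_nhds hdB, fun _ => h⟩
    · exact ⟨Set.univ, Set.univ, isOpen_univ, trivial, Filter.univ_mem, fun h => absurd h hd⟩
  choose A B hA hxA hB hAB using h
  obtain ⟨t, htD, ht⟩ := hD.elim_nhds_subcover B (fun y _ => hB y)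
  set A' : Set M := ⋂ d ∈ t, A d
  have hA'o : IsOpen A' := isOpen_biInter_finset (fun d _ => hA d)
  have hxA' : x ∈ A' := Set.mem_iInter₂.2 (fun d _ => hxA d)
  have hA'D : ∀ g : G, ∀ a ∈ A', g • a ∉ K \ interior K := by
    intro g a ha hg
    obtain ⟨d, hd, hgd⟩ := Set.mem_iUnion₂.1 (ht hg)
    exact hAB d (htD d hd) g a (Set.mem_iInter₂.1 ha d hd) hgd
  have hO : IsOpen (A' ∩ interior K) := hA'o.inter isOpen_interior
  have hxO : x ∈ A' ∩ interior K := ⟨hxA', hKint⟩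
  set V := connectedComponentIn (A' ∩ interior K) x
  have hVo : IsOpen V := hO.connectedComponentIn
  have hVc : IsPreconnected V := isPreconnected_connectedComponentIn
  have hxV : x ∈ V := mem_connectedComponentIn hxO
  have hVs : V ⊆ A' ∩ interior K := connectedComponentIn_subset _ _
  -- a connected set missing D and meeting int K lies in int K
  have hconn : ∀ T : Set M, IsPreconnected T → (∀ y ∈ T, y ∉ K \ interior K) → (T ∩ interior K).Nonempty → T ⊆ interior K := by
    intro T hT hTD hTn
    refine hT.subset_left_of_subset_union isOpen_interior hKc.isClosed.isOpen_compl ?_ ?_ hTn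
    · exact Set.disjoint_left.2 (fun a ha hb => hb (interior_subset ha))
    · intro y hy
      by_cases hyK : y ∈ K
      · left; by_contra hc; exact hTD y hy ⟨hyK, hc⟩
      · right; exact hyK
  set V' : Set M := ⋃ g : MulAction.stabilizer G x, (fun y => (g : G) • y) '' V
  have hmem : ∀ y, y ∈ V' ↔ ∃ g : G, g • x = x ∧ ∃ v ∈ V, g • v = y := by
    intro y
    simp only [V', Set.mem_iUnion, Set.mem_image, Subtype.exists, MulAction.mem_stabilizer_iff, exists_prop]
  have hV'o : IsOpen V' := isOpen_iUnion (fun g => isOpenMap_smul (g : G) V hVo)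
  have hV'c : IsPreconnected V' := by
    apply isPreconnected_iUnion
    · exact ⟨x, Set.mem_iInter.2 (fun g => ⟨x, hxV, g.2⟩)⟩
    · exact fun g => hVc.image _ (continuous_const_smul (g : G)).continuousOn
  have hxV' : x ∈ V' := (hmem x).2 ⟨1, one_smul _ _, x, hxV, one_smul _ _⟩
  have hV'D : ∀ g : G, ∀ y ∈ V', g • y ∉ K \ interior K := by
    intro g y hy
    obtain ⟨k, -, v, hv, rfl⟩ := (hmem y).1 hy
    rw [smul_smul]
    exact hA'D _ v (hVs hv).1
  have hV'K : V' ⊆ interior K := hconn V' hV'c (fun y hy => by simpa using hV'D 1 y hy) ⟨x, hxV', hKint⟩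
  refine ⟨V', K, hV'o, hV'c, hxV', hKc, hV'K.trans interior_subset, fun y hy => (hKW hy).1, ?_, ?_⟩
  · intro g y hy hgy
    have := hconn ((fun y => g • y) '' V') (hV'c.image _ (continuous_const_smul g).continuousOn) 
      (by rintro _ ⟨y, hy, rfl⟩; exact hV'D g y hy) ⟨g • y, ⟨y, hy, rfl⟩, hV'K hgy⟩
    exact hiso g (hKW (interior_subset (this ⟨x, hxV', rfl⟩))).2
  · intro g hg y hy
    obtain ⟨k, hk, v, hv, rfl⟩ := (hmem y).1 hy
    exact (hmem _).2 ⟨g * k, by rw [mul_smul, hk, hg], v, hv, by rw [mul_smul]⟩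

end act
end Newman
end

section
set_option autoImplicit false
open Topology
namespace Newman
section act
variable {G M : Type*} [Group G] [TopologicalSpace M] [MulAction G M] [ContinuousConstSMul G M]

lemma iter_smul (a : G) (k : ℕ) (x : M) : (fun y : M => a • y)^[k] x = a ^ k • x := by
  induction k with
  | zero => simp
  | succ j ih => rw [Function.iterate_succ_apply', ih, smul_smul, pow_succ']

lemma pow_fix (a : G) (x : M) (h : a • x = x) (k : ℕ) : a ^ k • x = x := by
  induction k with
  | zero => simp
  | succ j ih => rw [pow_succ, mul_smul, h, ih]

open Classical in
lemma power_conn [T2Space M] (NW : NewmanProp M) (a : G) (N : Set M) (hN : IsOpen N) (hconn : IsPreconnected N)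
    (hm : ∀ x ∈ N, a • x ∈ N)
    (hb : ∀ x ∈ N, (¬ ∃ m : ℕ, 0 < m ∧ ∀ᶠ y in 𝓝 x, a ^ m • y = y) → a • x = x) (z : M) (hz : z ∈ N) :
    ∃ m : ℕ, 0 < m ∧ ∀ᶠ y in 𝓝 z, a ^ m • y = y := by
  by_contra hbad
  have hca : Continuous (fun x : M => a • x) := continuous_const_smul a
  have key : ∀ m : ℕ, 0 < m → ∀ x ∈ N, (∀ᶠ y in 𝓝 x, a ^ m • y = y) → a • x = x := by
    intro m hm0
    set U : Set M := {x | x ∈ N ∧ ∀ᶠ y in 𝓝 x, a ^ m • y = y} with hU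
    have hUo : IsOpen U := by
      have h1 : IsOpen {x : M | ∀ᶠ y in 𝓝 x, a ^ m • y = y} := isOpen_setOfPred_eventually_nhds
      exact hN.inter h1
    have hUcl : ∀ x ∈ N, (∃ k : ℕ, 0 < k ∧ ∀ᶠ y in 𝓝 x, a ^ k • y = y) → x ∈ closure U → x ∈ U := by
      rintro x hx ⟨k, hk, hkx⟩ hxU
      refine ⟨hx, ?_⟩
      refine newman_pt NW (fun y => a ^ m • y) (continuous_const_smul _) k hk x ?_ ?_
      · filter_upwards [hkx] with y hy
        rw [iter_smul, ← pow_mul, mul_comm, pow_mul]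
        exact pow_fix _ _ hy m
      · exact (mem_closure_iff_frequently.1 hxU).mono (fun y hy => hy.2)
    have hUinv : ∀ x ∈ U, a • x ∈ U := by
      rintro x ⟨hx, hxe⟩
      refine ⟨hm x hx, ?_⟩
      have ht : Filter.Tendsto (fun y : M => a⁻¹ • y) (𝓝 (a • x)) (𝓝 x) := by
        have := (continuous_const_smul (a⁻¹) : Continuous (fun y : M => a⁻¹ • y)).tendsto (a • x)
        rwa [inv_smul_smul] at this
      filter_upwards [ht.eventually hxe] with y hy
      have h2 : a • a ^ m • a⁻¹ • y = y := by rw [hy, smul_inv_smul]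
      rw [smul_smul, ← pow_succ', pow_succ, mul_smul, smul_inv_smul] at h2
      exact h2
    set h : M → M := fun x => if x ∈ U then a • x else x with hh
    have hhU : ∀ x ∈ U, h x = a • x := fun x hx => by simp [hh, hx]
    have hhn : ∀ x, x ∉ U → h x = x := fun x hx => by simp [hh, hx]
    have hmaps : Set.MapsTo h N N := by
      intro x hx
      by_cases hxU : x ∈ U
      · rw [hhU x hxU]; exact hm x hx
      · rw [hhn x hxU]; exact hx
    have hcl : ∀ x, x ∉ closure U → ∀ᶠ y in 𝓝 x, h y = y := by
      intro x hx
      filter_upwards [isClosed_closure.isOpen_compl.mem_nhds hx] with y hy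
      exact hhn y (fun hyU => hy (subset_closure hyU))
    have hcont : ContinuousOn h N := by
      intro x hx
      apply ContinuousAt.continuousWithinAt
      by_cases hxU : x ∈ U
      · refine hca.continuousAt.congr ?_
        filter_upwards [hUo.mem_nhds hxU] with y hy
        exact (hhU y hy).symm
      · by_cases hg : ∃ k : ℕ, 0 < k ∧ ∀ᶠ y in 𝓝 x, a ^ k • y = y
        · refine continuousAt_id.congr ?_
          filter_upwards [hcl x (fun hc => hxU (hUcl x hx hg hc))] with y hy
          exact hy.symm
        · have hax := hb x hx hg
          show Filter.Tendsto h (𝓝 x) (𝓝 (h x))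
          rw [hhn x hxU]
          have h1 : Filter.Tendsto (fun y : M => a • y) (𝓝 x) (𝓝 x) := by
            have := hca.tendsto x
            rwa [hax] at this
          exact h1.if' Filter.tendsto_id
    have hper : ∀ x ∈ N, h^[m] x = x := by
      intro x hx
      by_cases hxU : x ∈ U
      · have : ∀ i, h^[i] x = a ^ i • x ∧ h^[i] x ∈ U := by
          intro i
          induction i with
          | zero => simpa using hxU
          | succ j ih =>
            rw [Function.iterate_succ_apply', hhU _ ih.2]
            refine ⟨?_, hUinv _ ih.2⟩
            rw [ih.1, smul_smul, pow_succ']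
        rw [(this m).1]
        exact Filter.Eventually.self_of_nhds (p := fun y => a ^ m • y = y) hxU.2
      · exact Function.iterate_fixed (hhn x hxU) m
    by_cases hd : ∃ y ∈ N, y ∉ closure U
    · obtain ⟨y, hy, hyU⟩ := hd
      have := newman_conn NW N h m hN hconn hmaps hcont hm0 hper y hy (hcl y hyU)
      intro x hx hxe
      have h3 := this x hx
      rwa [hhU x ⟨hx, hxe⟩] at h3
    · push Not at hd
      exfalso
      apply hbad
      refine ⟨m, hm0, ?_⟩
      filter_upwards [hN.mem_nhds hz] with y hy
      have hc : IsClosed {y : M | a ^ m • y = y} := isClosed_eq (continuous_const_smul _) continuous_id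
      have hs : closure U ⊆ {y : M | a ^ m • y = y} := closure_minimal (by
        rintro x ⟨-, hx⟩
        exact Filter.Eventually.self_of_nhds (p := fun y => a ^ m • y = y) hx) hc
      exact hs (hd y hy)
  apply hbad
  refine ⟨1, one_pos, ?_⟩
  filter_upwards [hN.mem_nhds hz] with y hy
  rw [pow_one]
  by_cases hg : ∃ k : ℕ, 0 < k ∧ ∀ᶠ x in 𝓝 y, a ^ k • x = x
  · obtain ⟨k, hk, hke⟩ := hg
    exact key k hk y hy hke
  · exact hb y hy hg

lemma locally_periodic [Countable G] [T2Space M] [LocallyCompactSpace M] [LocallyConnectedSpace M] 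
    [T2Space (Quotient (MulAction.orbitRel G M))] (NW : NewmanProp M) (g : G) (z : M) (hz : g • z = z) :
    ∃ m : ℕ, 0 < m ∧ ∀ᶠ y in 𝓝 z, g ^ m • y = y := by
  by_contra hbad
  obtain ⟨N0, C0, hN0, -, hz0, hC0, hN0C, -, -, hinv⟩ := good_nbhd (G := G) z Set.univ Filter.univ_mem
  have hgo : IsOpen {x : M | ∃ m : ℕ, 0 < m ∧ ∀ᶠ y in 𝓝 x, g ^ m • y = y} := by
    have : {x : M | ∃ m : ℕ, 0 < m ∧ ∀ᶠ y in 𝓝 x, g ^ m • y = y} = 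
        ⋃ m : ℕ, ⋃ _ : 0 < m, {x : M | ∀ᶠ y in 𝓝 x, g ^ m • y = y} := by
      ext x; simp
    rw [this]
    exact isOpen_iUnion (fun m => isOpen_iUnion (fun _ => isOpen_setOfPred_eventually_nhds))
  have hiter : ∀ y ∈ N0, ∀ i : ℕ, g ^ i • y ∈ N0 := fun y hy i => hinv (g ^ i) (pow_fix g z hz i) y hy
  have hfin : ∀ y ∈ N0, ∃ k : ℕ, g ^ (k + 1) • y = y := by
    intro y hy
    have hf := orbit_compact_finite (G := G) y C0 hC0
    obtain ⟨i, -, j, -, hij, he⟩ := Set.infinite_univ.exists_ne_map_eq_of_mapsTo (f := fun i : ℕ => g ^ i • y) 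
      (t := MulAction.orbit G y ∩ C0) (fun i _ => ⟨MulAction.mem_orbit _ _, hN0C (hiter y hy i)⟩) hf
    have hlt : ∀ i j : ℕ, i < j → g ^ i • y = g ^ j • y → ∃ k : ℕ, g ^ (k + 1) • y = y := by
      intro i j hij he
      refine ⟨j - i - 1, ?_⟩
      have h1 : j = i + (j - i - 1 + 1) := by omega
      rw [h1, pow_add, mul_smul] at he
      exact (smul_left_cancel _ he).symm
    rcases lt_or_gt_of_ne hij with h | h
    · exact hlt i j h he
    · exact hlt j i h he.symm
  obtain ⟨k, z', ⟨hz'N, hz'b⟩, U, hU, hz'U, hF⟩ := baire_sub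
    (N0 ∩ {x : M | ∃ m : ℕ, 0 < m ∧ ∀ᶠ y in 𝓝 x, g ^ m • y = y}ᶜ)
    (hN0.isLocallyClosed.inter hgo.isClosed_compl.isLocallyClosed) ⟨z, hz0, hbad⟩
    (fun k : ℕ => {y : M | g ^ (k + 1) • y = y}) (fun k => isClosed_eq (continuous_const_smul _) continuous_id)
    (fun y hy => hfin y hy.1)
  have hgz' : g ^ (k + 1) • z' = z' := hF z' ⟨hz'N, hz'b⟩ hz'U
  obtain ⟨N, C, hN, hNc, hzN, -, hNC, hCU, -, hNinv⟩ := good_nbhd (G := G) z' (U ∩ N0) 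
    ((hU.inter hN0).mem_nhds ⟨hz'U, hz'N⟩)
  obtain ⟨m, hm, hme⟩ := power_conn NW (g ^ (k + 1)) N hN hNc (hNinv _ hgz') (by
    intro x hx hxb
    have hx' := hCU (hNC hx)
    refine hF x ⟨hx'.2, ?_⟩ hx'.1
    rintro ⟨m, hm, hme⟩
    apply hxb
    refine ⟨m, hm, ?_⟩
    filter_upwards [hme] with y hy
    rw [← pow_mul, mul_comm, pow_mul]
    exact pow_fix _ _ hy _) z' hzN
  apply hz'b
  refine ⟨(k + 1) * m, by positivity, ?_⟩
  simpa only [pow_mul] using hme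

lemma claimA [Countable G] [T2Space M] [LocallyCompactSpace M] [LocallyConnectedSpace M] [PreconnectedSpace M] [FaithfulSMul G M]
    [T2Space (Quotient (MulAction.orbitRel G M))] (NW : NewmanProp M) (g : G) (y : M) (hy : ∀ᶠ x in 𝓝 y, g • x = x) : g = 1 := by
  have hFo : IsOpen {y : M | ∀ᶠ x in 𝓝 y, g • x = x} := isOpen_setOfPred_eventually_nhds
  have := isPreconnected_univ.subset_of_closure_inter_subset hFo ⟨y, trivial, hy⟩ (by
    rintro z ⟨hz, -⟩
    have hfr := mem_closure_iff_frequently.1 hz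
    have hgz := fixed_of_freq (fun x : M => g • x) z (continuous_const_smul g).continuousAt hfr
    obtain ⟨m, hm, hme⟩ := locally_periodic NW g z hgz
    refine newman_pt NW (fun x : M => g • x) (continuous_const_smul g) m hm z ?_ hfr
    simpa only [iter_smul] using hme)
  apply FaithfulSMul.eq_of_smul_eq_smul (α := M)
  intro x
  rw [one_smul]
  exact Filter.Eventually.self_of_nhds (p := fun x => g • x = x) (this (Set.mem_univ x))

lemma claimB [Countable G] [T2Space M] [LocallyCompactSpace M] [LocallyConnectedSpace M] [PreconnectedSpace M] [FaithfulSMul G M]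
    [T2Space (Quotient (MulAction.orbitRel G M))] (NW : NewmanProp M) (x : M) : Finite (MulAction.stabilizer G x) := by
  obtain ⟨V, C, hV, -, hxV, hC, hVC, -, -, hinv⟩ := good_nbhd (G := G) x Set.univ Filter.univ_mem
  have hd : Dense (⋂ g : {g : G // g ≠ 1}, {y : M | g.1 • y = y}ᶜ) := by
    apply dense_iInter_of_isOpen
    · intro g
      exact (isClosed_eq (continuous_const_smul _) continuous_id).isOpen_compl
    · intro g
      rw [← interior_eq_empty_iff_dense_compl]
      by_contra hne
      obtain ⟨y, hy⟩ := Set.nonempty_iff_ne_empty.2 hne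
      exact g.2 (claimA NW g.1 y (mem_interior_iff_mem_nhds.1 hy))
  obtain ⟨y, hyV, hy⟩ := hd.inter_open_nonempty V hV ⟨x, hxV⟩
  have hy' : ∀ g : G, g • y = y → g = 1 := by
    intro g hg
    by_contra hne
    exact Set.mem_iInter.1 hy ⟨g, hne⟩ hg
  have hf := (orbit_compact_finite (G := G) y C hC).to_subtype
  refine Finite.of_injective (β := ↥(MulAction.orbit G y ∩ C)) 
    (fun g => ⟨(g : G) • y, MulAction.mem_orbit _ _, hVC (hinv g g.2 y hyV)⟩) ?_
  intro g k hgk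
  have h1 : (g : G) • y = (k : G) • y := congrArg Subtype.val hgk
  have h2 := hy' ((k : G)⁻¹ * g) (by rw [mul_smul, h1, inv_smul_smul])
  exact Subtype.ext (inv_mul_eq_one.1 h2).symm

lemma pair_nbhd [Countable G] [T2Space M] [LocallyCompactSpace M] [LocallyConnectedSpace M]
    [T2Space (Quotient (MulAction.orbitRel G M))] (hfin : ∀ x : M, Finite (MulAction.stabilizer G x)) (p : M × M) :
    ∃ O ∈ 𝓝 p, {g : G | ∃ u : M, (u, g • u) ∈ O}.Finite := by
  obtain ⟨a, b⟩ := p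
  by_cases hb : b ∈ MulAction.orbit G a
  · obtain ⟨k, rfl⟩ := hb
    obtain ⟨V, C, hV, -, hxV, -, -, -, hst, -⟩ := good_nbhd (G := G) a Set.univ Filter.univ_mem
    refine ⟨V ×ˢ ((fun y => k⁻¹ • y) ⁻¹' V), prod_mem_nhds (hV.mem_nhds hxV) 
      ((hV.preimage (continuous_const_smul _)).mem_nhds ?_), ?_⟩
    · simpa using hxV
    · have := hfin a
      refine ((Set.toFinite (MulAction.stabilizer G a : Set G)).image (fun g => k * g)).subset ?_
      rintro g ⟨u, hu, hgu⟩
      refine ⟨k⁻¹ * g, ?_, by simp⟩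
      exact hst (k⁻¹ * g) u hu (by rw [mul_smul]; exact hgu)
  · obtain ⟨U, W, hU, hW, hxU, hyW, h⟩ := orbit_sep (G := G) a b hb
    refine ⟨U ×ˢ W, prod_mem_nhds (hU.mem_nhds hxU) (hW.mem_nhds hyW), ?_⟩
    convert Set.finite_empty
    ext g
    simp only [Set.mem_setOf_eq, Set.mem_empty_iff_false, iff_false]
    rintro ⟨u, hu, hgu⟩
    exact h g u hu hgu

open Pointwise in
lemma perfect [Countable G] [T2Space M] [LocallyCompactSpace M] [LocallyConnectedSpace M]
    [T2Space (Quotient (MulAction.orbitRel G M))] (hfin : ∀ x : M, Finite (MulAction.stabilizer G x)) 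
    (A B : Set M) (hA : IsCompact A) (hB : IsCompact B) : {g : G | (g • A ∩ B).Nonempty}.Finite := by
  choose O hO hf using pair_nbhd hfin
  obtain ⟨t, -, ht⟩ := (hA.prod hB).elim_nhds_subcover O (fun p _ => hO p)
  refine (t.finite_toSet.biUnion (fun p _ => hf p)).subset ?_
  rintro g ⟨_, ⟨u, hu, rfl⟩, hgu⟩
  obtain ⟨p, hp, h⟩ := Set.mem_iUnion₂.1 (ht (Set.mk_mem_prod hu hgu))
  exact Set.mem_iUnion₂.2 ⟨p, hp, u, h⟩

end act
end Newman
end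

open Pointwise

/-- A countable group acting effectively on a connected topological `n`-manifold with
Hausdorff orbit space acts perfectly: for all compact `A, B` the set
`{g : gA ∩ B ≠ ∅}` is finite; in particular all stabilizers are finite. -/
theorem stmt15 {G M : Type*} (n : ℕ) [Group G] [Countable G]
    [TopologicalSpace M] [ConnectedSpace M] [T2Space M]
    [ChartedSpace (EuclideanSpace ℝ (Fin n)) M]
    [MulAction G M] [FaithfulSMul G M] [ContinuousConstSMul G M]
    [T2Space (Quotient (MulAction.orbitRel G M))] :
    (∀ A B : Set M, IsCompact A → IsCompact B →
      {g : G | (g • A ∩ B).Nonempty}.Finite) ∧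
    (∀ x : M, Finite (MulAction.stabilizer G x)) := by
  have : LocallyCompactSpace M := ChartedSpace.locallyCompactSpace (EuclideanSpace ℝ (Fin n)) M
  have : LocallyConnectedSpace M := ChartedSpace.locallyConnectedSpace (EuclideanSpace ℝ (Fin n)) M
  have hfin : ∀ x : M, Finite (MulAction.stabilizer G x) :=
    fun x => Newman.claimB (Newman.newman_mfd (n := n)) x
  exact ⟨fun A B hA hB => Newman.perfect hfin A B hA hB, hfin⟩
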